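/- Let Ω_0, Ω_1 ⊆ ℝ^d be bounded measurable sets of positive Lebesgue measure, and let 𝒰_{Ω_i} denote the uniform probability density |Ω_i|^{−1} 1_{Ω_i}. Call a pair (ρ, v) admissible if ρ : ℝ^d × [0,1] → [0,∞) and v : ℝ^d × [0,1] → ℝ^d are measurable, for a.e. t ∈ [0,1] there are a bounded measurable set E_t of positive measure and a constant c(t) > 0 with ρ(·,t) = c(t)·1_{E_t} a.e. and ∫_{ℝ^d} ρ(x,t) dx = 1 (so ρ(·,t) is a uniform probability density on a bounded set), ∫_0^1 ∫_{ℝ^d} ρ |v|² dx dt < ∞, and for every smooth compactly supported test function q on ℝ^d × [0,1] one has ∫_0^1 ∫_{ℝ^d} ρ (∂_t q + v·∇q) dx dt = ∫ 𝒰_{Ω_1}(x) q(x,1) dx − ∫ 𝒰_{Ω_0}(x) q(x,0) dx. Then the infimum of the action ∫_0^1 ∫_{ℝ^d} ρ |v|² dx dt over all admissible pairs equals d_W(𝒰_{Ω_0} dx, 𝒰_{Ω_1} dx)². -/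

import Mathlib

open Set MeasureTheory
open scoped ENNReal RealInnerProductSpace

/-- The space-time measure: Lebesgue measure on `ℝ^d` times Lebesgue measure
restricted to `[0,1]`. -/
noncomputable def spaceTime (d : ℕ) : Measure (EuclideanSpace ℝ (Fin d) × ℝ) :=
  (volume : Measure (EuclideanSpace ℝ (Fin d))).prod (volume.restrict (Icc (0:ℝ) 1))

/-- Admissibility of a pair `(ρ, v)` for the shape distance without volume constraint:
for a.e. `t ∈ [0,1]` the slice `ρ(·,t)` is (a.e.) a uniform probability density
`c(t)·1_{E_t}` on a bounded measurable set of positive measure, the action is finite, and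
the continuity equation holds weakly with endpoint data the uniform probability densities
`𝒰_{Ω₀}` and `𝒰_{Ω₁}`. -/
def UniformAdmissible {d : ℕ} (Ω₀ Ω₁ : Set (EuclideanSpace ℝ (Fin d)))
    (ρ : EuclideanSpace ℝ (Fin d) → ℝ → ℝ)
    (v : EuclideanSpace ℝ (Fin d) → ℝ → EuclideanSpace ℝ (Fin d)) : Prop :=
  Measurable (fun q : EuclideanSpace ℝ (Fin d) × ℝ => ρ q.1 q.2) ∧
  Measurable (fun q : EuclideanSpace ℝ (Fin d) × ℝ => v q.1 q.2) ∧
  (∀ x t, 0 ≤ ρ x t) ∧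
  (∀ᵐ t ∂(volume.restrict (Icc (0:ℝ) 1)),
    ∃ (E : Set (EuclideanSpace ℝ (Fin d))) (c : ℝ),
      MeasurableSet E ∧ Bornology.IsBounded E ∧ 0 < volume E ∧ 0 < c ∧
      (∀ᵐ x ∂(volume : Measure (EuclideanSpace ℝ (Fin d))),
        ρ x t = c * E.indicator (fun _ => (1:ℝ)) x) ∧
      (∫ x, ρ x t) = 1) ∧
  (∫⁻ q, ENNReal.ofReal (ρ q.1 q.2 * ‖v q.1 q.2‖ ^ 2) ∂(spaceTime d)) < ⊤ ∧
  ∀ q : EuclideanSpace ℝ (Fin d) → ℝ → ℝ,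
    ContDiff ℝ (⊤ : ℕ∞) (fun z : EuclideanSpace ℝ (Fin d) × ℝ => q z.1 z.2) →
    HasCompactSupport (fun z : EuclideanSpace ℝ (Fin d) × ℝ => q z.1 z.2) →
    (∫ t in Icc (0:ℝ) 1, ∫ x, ρ x t *
        (deriv (fun s => q x s) t + ⟪v x t, gradient (fun y => q y t) x⟫)) =
      (volume Ω₁).toReal⁻¹ * (∫ x in Ω₁, q x 1) -
        (volume Ω₀).toReal⁻¹ * (∫ x in Ω₀, q x 0)

/-- The squared quadratic Wasserstein cost between two measures on `ℝ^d`: the infimum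
over couplings of the integral of `|x − y|²`. -/
noncomputable def W2sq {d : ℕ}
    (μ ν : Measure (EuclideanSpace ℝ (Fin d))) : ℝ≥0∞ :=
  sInf { C | ∃ π : Measure (EuclideanSpace ℝ (Fin d) × EuclideanSpace ℝ (Fin d)),
    π.map Prod.fst = μ ∧ π.map Prod.snd = ν ∧
    C = ∫⁻ q, ENNReal.ofReal (‖q.1 - q.2‖ ^ 2) ∂π }

/-!
Lower bound: cut the two endpoint domains into small cells. The finite transport problem between
the masses of the cells has a Kantorovich potential `f`, obtained from Hahn–Banach. The Hopf–Lax
evolution of `f` solves `∂ₜφ + |∇φ|² / 2 ≤ 0`, so testing the continuity equation with a smooth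
version of `φ` bounds half the action from below by the dual value of the discrete problem, up to
an error which vanishes with the size of the cells.

Upper bound: shrink every cell homothetically to its center, let small balls grow from the centers,
travel along the segments of an optimal discrete plan and shrink to points again, and expand these
points to the cells at the other end. Optimal segments do not cross, by cyclical monotonicity, so
the balls stay disjoint when they are small enough, and the density stays uniform because all
pieces are scaled by a common factor. Shrinking and expanding is cheap for small cells, and the
middle part costs the discrete transport cost up to a factor close to one.
-/

/-! ### Finite optimal transport -/

section FiniteTransport

variable {ι κ : Type*} [Fintype ι] [Fintype κ] {m : ι → ℝ} {n : κ → ℝ}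

/-- `p` is a transport plan between the finite families of masses `m` and `n`: nonnegative weights
on the product index set with row sums `m` and column sums `n`. -/
structure IsTransportPlan (m : ι → ℝ) (n : κ → ℝ) (p : ι × κ → ℝ) : Prop where
  nonneg (a : ι × κ) : 0 ≤ p a
  sum_snd (k : ι) : ∑ l, p (k, l) = m k
  sum_fst (l : κ) : ∑ k, p (k, l) = n l

namespace IsTransportPlan

variable {p : ι × κ → ℝ}

lemma sum_mul_fst (hp : IsTransportPlan m n p) (f : ι → ℝ) :
    ∑ a, p a * f a.1 = ∑ k, m k * f k := by
  simp only [Fintype.sum_prod_type, ← Finset.sum_mul, hp.sum_snd]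

lemma mem_stdSimplex (hp : IsTransportPlan m n p) (hm : m ∈ stdSimplex ℝ ι) :
    p ∈ stdSimplex ℝ (ι × κ) :=
  ⟨hp.nonneg, by simpa [hm.2] using hp.sum_mul_fst fun _ => 1⟩

lemma eq_zero_of_fst (hp : IsTransportPlan m n p) {a : ι × κ} (ha : m a.1 = 0) : p a = 0 :=
  (Finset.sum_eq_zero_iff_of_nonneg fun l _ => hp.nonneg (a.1, l)).1
    ((hp.sum_snd a.1).trans ha) a.2 (Finset.mem_univ _)

lemma eq_zero_of_snd (hp : IsTransportPlan m n p) {a : ι × κ} (ha : n a.2 = 0) : p a = 0 :=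
  (Finset.sum_eq_zero_iff_of_nonneg fun k _ => hp.nonneg (k, a.2)).1
    ((hp.sum_fst a.2).trans ha) a.1 (Finset.mem_univ _)

end IsTransportPlan

lemma isTransportPlan_mul (hm : m ∈ stdSimplex ℝ ι) (hn : n ∈ stdSimplex ℝ κ) :
    IsTransportPlan m n fun a => m a.1 * n a.2 where
  nonneg a := mul_nonneg (hm.1 a.1) (hn.1 a.2)
  sum_snd k := by simp only [← Finset.mul_sum, hn.2, mul_one]
  sum_fst l := by simp only [← Finset.sum_mul, hm.2, one_mul]

/-- The linear map sending weights on `ι × κ` to their row sums, their column sums and their total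
cost. -/
noncomputable def marginalsCost (c : ι × κ → ℝ) : (ι × κ → ℝ) →L[ℝ] (ι → ℝ) × (κ → ℝ) × ℝ :=
  (ContinuousLinearMap.pi fun k => ∑ l, .proj (k, l)).prod
    ((ContinuousLinearMap.pi fun l => ∑ k, .proj (k, l)).prod (∑ a, c a • .proj a))

lemma marginalsCost_apply (c p : ι × κ → ℝ) :
    marginalsCost c p =
      (fun k => ∑ l, p (k, l), fun l => ∑ k, p (k, l), ∑ a, p a * c a) := by
  ext <;> simp [marginalsCost, mul_comm]

lemma IsTransportPlan.marginalsCost_eq {p : ι × κ → ℝ} (hp : IsTransportPlan m n p)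
    (c : ι × κ → ℝ) : marginalsCost c p = (m, n, ∑ a, p a * c a) := by
  simp only [marginalsCost_apply, hp.sum_snd, hp.sum_fst]

lemma marginalsCost_single [DecidableEq ι] [DecidableEq κ] (c : ι × κ → ℝ) (k : ι) (l : κ) :
    marginalsCost c (Pi.single (k, l) 1) = (Pi.single k 1, Pi.single l 1, c (k, l)) := by
  rw [marginalsCost_apply]
  ext i
  · by_cases h : i = k <;> simp [Pi.single_apply, h]
  · by_cases h : i = l <;> simp [Pi.single_apply, h]
  · simp [Pi.single_apply]

lemma linearMap_pi_apply {ι : Type*} [Fintype ι] [DecidableEq ι] (F : (ι → ℝ) →ₗ[ℝ] ℝ)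
    (x : ι → ℝ) : F x = ∑ k, x k * F (Pi.single k 1) := by
  rw [LinearMap.pi_apply_eq_sum_univ F x]
  congr! with k _
  simp [Pi.single_apply, eq_comm]

lemma linearMap_pi_prod_pi_apply [DecidableEq ι] [DecidableEq κ]
    (F : (ι → ℝ) × (κ → ℝ) × ℝ →ₗ[ℝ] ℝ) (x : ι → ℝ) (y : κ → ℝ) (r : ℝ) :
    F (x, y, r) = ∑ k, x k * F (Pi.single k 1, 0, 0) + ∑ l, y l * F (0, Pi.single l 1, 0) +
      r * F (0, 0, 1) := by
  have hx : F (x, 0, 0) = ∑ k, x k * F (Pi.single k 1, 0, 0) :=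
    linearMap_pi_apply (F ∘ₗ .inl ℝ _ _) x
  have hy : F (0, y, 0) = ∑ l, y l * F (0, Pi.single l 1, 0) :=
    linearMap_pi_apply (F ∘ₗ .inr ℝ _ _ ∘ₗ .inl ℝ _ _) y
  have hr : F (0, 0, r) = r * F (0, 0, 1) := by
    rw [← smul_eq_mul, ← map_smul]; simp
  rw [← hx, ← hy, ← hr, ← map_add, ← map_add]
  simp

/-- If no plan had cost at most `C`, then Hahn–Banach would separate the compact set of
`(marginals, cost)` triples of probability weights from the ray `{m} × {n} × (-∞, C]`; testing the
separating functional on the product plan shows that its cost component is negative, and after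
normalisation its coordinates form a dual competitor with value larger than `C`. -/
lemma exists_isTransportPlan_sum_le_of_forall_dual_le (hm : m ∈ stdSimplex ℝ ι)
    (hn : n ∈ stdSimplex ℝ κ) (c : ι × κ → ℝ) (C : ℝ)
    (hC : ∀ (f : ι → ℝ) (g : κ → ℝ), (∀ k l, g l ≤ f k + c (k, l)) →
      ∑ l, n l * g l - ∑ k, m k * f k ≤ C) :
    ∃ p, IsTransportPlan m n p ∧ ∑ a, p a * c a ≤ C := by
  classical
  by_contra! hno
  have hdisj : Disjoint (marginalsCost c '' stdSimplex ℝ (ι × κ))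
      ({m} ×ˢ ({n} ×ˢ Iic C)) := by
    rw [Set.disjoint_left]
    rintro _ ⟨p, hp, rfl⟩ hpT
    rw [marginalsCost_apply] at hpT
    exact (hno p ⟨hp.1, congrFun hpT.1, congrFun hpT.2.1⟩).not_ge hpT.2.2
  obtain ⟨F, u, v, hlt, huv, hgt⟩ := geometric_hahn_banach_compact_closed
    ((convex_stdSimplex ℝ _).is_linear_image (f := marginalsCost c) (marginalsCost c).isLinear)
    ((isCompact_stdSimplex ℝ _).image (marginalsCost c).continuous)
    ((convex_singleton m).prod ((convex_singleton n).prod (convex_Iic C)))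
    (isClosed_singleton.prod (isClosed_singleton.prod isClosed_Iic)) hdisj
  have hF := linearMap_pi_prod_pi_apply F.toLinearMap
  simp only [ContinuousLinearMap.coe_coe] at hF
  set Λ := F (0, 0, 1)
  have hray (r : ℝ) (hr : r ≤ C) : u < F (m, n, r) := huv.trans (hgt _ ⟨rfl, rfl, hr⟩)
  have hvertex (k : ι) (l : κ) :
      F (Pi.single k 1, 0, 0) + F (0, Pi.single l 1, 0) + c (k, l) * Λ < u := by
    have h := hlt _ (mem_image_of_mem _ (single_mem_stdSimplex ℝ (k, l)))
    rw [marginalsCost_single, hF] at h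
    simpa [Pi.single_apply] using h
  have hΛ : Λ < 0 := by
    have hprod := isTransportPlan_mul hm hn
    have h := hlt _ (mem_image_of_mem _ (hprod.mem_stdSimplex hm))
    rw [hprod.marginalsCost_eq] at h
    set s := ∑ a : ι × κ, m a.1 * n a.2 * c a
    have h' := h.trans (hray _ (min_le_left C (s - 1)))
    rw [hF, hF m n (min C _)] at h'
    nlinarith [min_le_right C (s - 1)]
  have hdual := hC (fun k => F (Pi.single k 1, 0, 0) / Λ)
    (fun l => (u - F (0, Pi.single l 1, 0)) / Λ) fun k l => by
      rw [div_add' _ _ _ hΛ.ne]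
      exact div_le_div_of_nonpos_of_le hΛ.le (by linarith [hvertex k l])
  have hlast := hray C le_rfl
  simp only [mul_div_assoc', ← Finset.sum_div, mul_sub, Finset.sum_sub_distrib,
    ← Finset.sum_mul, hn.2, ← sub_div, div_le_iff_of_neg hΛ] at hdual
  rw [hF] at hlast
  linarith

lemma isCompact_setOf_isTransportPlan (hm : m ∈ stdSimplex ℝ ι) :
    IsCompact {p | IsTransportPlan m n p} := by
  refine (isCompact_stdSimplex ℝ (ι × κ)).of_isClosed_subset ?_ fun p hp => hp.mem_stdSimplex hm
  have h : {p | IsTransportPlan m n p} = (⋂ a, {p | 0 ≤ p a}) ∩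
      ((⋂ k, {p | ∑ l, p (k, l) = m k}) ∩ (⋂ l, {p | ∑ k, p (k, l) = n l})) := by
    ext p
    simp only [mem_inter_iff, mem_iInter, mem_ofPred_eq]
    exact ⟨fun h => ⟨h.1, h.2, h.3⟩, fun h => ⟨h.1, h.2.1, h.2.2⟩⟩
  rw [h]
  exact (isClosed_iInter fun a => isClosed_le (by fun_prop) (by fun_prop)).inter
    ((isClosed_iInter fun k => isClosed_eq (by fun_prop) (by fun_prop)).inter
      (isClosed_iInter fun l => isClosed_eq (by fun_prop) (by fun_prop)))

/-- `p` minimises the total cost among the plans with the same marginals. -/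
def IsOptimalPlan (m : ι → ℝ) (n : κ → ℝ) (c p : ι × κ → ℝ) : Prop :=
  IsTransportPlan m n p ∧ ∀ q, IsTransportPlan m n q → ∑ a, p a * c a ≤ ∑ a, q a * c a

lemma IsTransportPlan.exists_isOptimalPlan {p : ι × κ → ℝ} (hp : IsTransportPlan m n p)
    (hm : m ∈ stdSimplex ℝ ι) (c : ι × κ → ℝ) : ∃ q, IsOptimalPlan m n c q :=
  (isCompact_setOf_isTransportPlan hm).exists_isMinOn
    (f := fun q => ∑ a, q a * c a) ⟨p, hp⟩ (by fun_prop)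

lemma IsTransportPlan.add_mul_mul {p : ι × κ → ℝ} (hp : IsTransportPlan m n p) {u : ι → ℝ}
    {w : κ → ℝ} (hu : ∑ k, u k = 0) (hw : ∑ l, w l = 0) (h : ∀ a, 0 ≤ p a + u a.1 * w a.2) :
    IsTransportPlan m n fun a => p a + u a.1 * w a.2 where
  nonneg := h
  sum_snd k := by
    simp only [Finset.sum_add_distrib, ← Finset.mul_sum, hw, hp.sum_snd, mul_zero, add_zero]
  sum_fst l := by
    simp only [Finset.sum_add_distrib, ← Finset.sum_mul, hu, hp.sum_fst, zero_mul, add_zero]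

/-- Otherwise moving a small mass from `(k, l)` and `(k', l')` to `(k, l')` and `(k', l)` would
lower the cost. -/
lemma IsOptimalPlan.cost_add_cost_le {c p : ι × κ → ℝ} (hp : IsOptimalPlan m n c p) {k k' : ι}
    {l l' : κ} (hkl : 0 < p (k, l)) (hkl' : 0 < p (k', l')) :
    c (k, l) + c (k', l') ≤ c (k, l') + c (k', l) := by
  classical
  rcases eq_or_ne k k' with rfl | hk
  · exact (add_comm _ _).le
  rcases eq_or_ne l l' with rfl | hl
  · rfl
  set ε := min (p (k, l)) (p (k', l'))
  have hε : 0 < ε := lt_min hkl hkl'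
  set u : ι → ℝ := ε • (Pi.single k 1 - Pi.single k' 1)
  set w : κ → ℝ := Pi.single l' 1 - Pi.single l 1
  have hq : IsTransportPlan m n fun a => p a + u a.1 * w a.2 := by
    refine hp.1.add_mul_mul (by simp [u, ← Finset.mul_sum]) (by simp [w]) fun ⟨i, j⟩ => ?_
    have h₀ := hp.1.nonneg (i, j)
    have h₁ : ε ≤ p (k, l) := min_le_left _ _
    have h₂ : ε ≤ p (k', l') := min_le_right _ _
    simp only [u, w, Pi.smul_apply, Pi.sub_apply, Pi.single_apply, smul_eq_mul]
    split_ifs <;> subst_vars <;> first | contradiction | linarith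
  have hcost : ∑ a : ι × κ, u a.1 * w a.2 * c a =
      ε * (c (k, l') + c (k', l) - (c (k, l) + c (k', l'))) := by
    simp [u, w, Fintype.sum_prod_type, Pi.single_apply, mul_sub, sub_mul,
      Finset.sum_sub_distrib, ite_mul]
    ring
  have h := hp.2 _ hq
  simp only [add_mul, Finset.sum_add_distrib, hcost] at h
  linarith [nonneg_of_mul_nonneg_right (nonneg_of_le_add_right h) hε]

end FiniteTransport

/-! ### Partitions, plans and couplings -/

section Coupling

variable {X Y ι κ : Type*} [MeasurableSpace X] [MeasurableSpace Y]
  {μ : Measure X} {ν : Measure Y} {Q : ι → Set X} {R : κ → Set Y}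

/-- The sets `Q k` are measurable, pairwise disjoint, and cover `μ`-almost every point. -/
structure IsAEPartition (μ : Measure X) (Q : ι → Set X) : Prop where
  measurableSet (k : ι) : MeasurableSet (Q k)
  disjoint : Pairwise fun k l => Disjoint (Q k) (Q l)
  ae_mem : ∀ᵐ x ∂μ, ∃ k, x ∈ Q k

lemma IsAEPartition.preimage {f : X → Y} (hf : Measurable f) (hR : IsAEPartition (μ.map f) R) :
    IsAEPartition μ fun l => f ⁻¹' R l where
  measurableSet l := hf (hR.measurableSet l)
  disjoint _ _ hkl := (hR.disjoint hkl).preimage f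
  ae_mem := ae_of_ae_map hf.aemeasurable hR.ae_mem

lemma IsAEPartition.prod {π : Measure (X × Y)} (hQ : IsAEPartition (π.map Prod.fst) Q)
    (hR : IsAEPartition (π.map Prod.snd) R) :
    IsAEPartition π fun a : ι × κ => Q a.1 ×ˢ R a.2 where
  measurableSet a := (hQ.measurableSet a.1).prod (hR.measurableSet a.2)
  disjoint a b hab := by
    refine Set.disjoint_prod.2 ?_
    by_contra! h
    exact hab (Prod.ext (hQ.disjoint.eq h.1) (hR.disjoint.eq h.2))
  ae_mem := by
    filter_upwards [(hQ.preimage measurable_fst).ae_mem, (hR.preimage measurable_snd).ae_mem]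
      with z ⟨k, hk⟩ ⟨l, hl⟩
    exact ⟨(k, l), hk, hl⟩

variable [Fintype ι] [Fintype κ]

namespace IsAEPartition

lemma sum_restrict (hQ : IsAEPartition μ Q) : ∑ k, μ.restrict (Q k) = μ := by
  rw [← Measure.sum_fintype, ← Measure.restrict_iUnion hQ.disjoint hQ.measurableSet]
  exact Measure.restrict_eq_self_of_ae_mem (by simpa using hQ.ae_mem)

lemma sum_measure_inter (hQ : IsAEPartition μ Q) (s : Set X) : ∑ k, μ (s ∩ Q k) = μ s := by
  conv_rhs => rw [← hQ.sum_restrict]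
  simp [Measure.restrict_apply' (hQ.measurableSet _)]

lemma sum_measureReal_inter [IsFiniteMeasure μ] (hQ : IsAEPartition μ Q) (s : Set X) :
    ∑ k, μ.real (s ∩ Q k) = μ.real s := by
  simp only [measureReal_def, ← hQ.sum_measure_inter s]
  exact (ENNReal.toReal_sum fun k _ => measure_ne_top μ _).symm

lemma measureReal_mem_stdSimplex [IsProbabilityMeasure μ] (hQ : IsAEPartition μ Q) :
    (fun k => μ.real (Q k)) ∈ stdSimplex ℝ ι :=
  ⟨fun _ => measureReal_nonneg, by simpa using hQ.sum_measureReal_inter univ⟩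

lemma sum_mul_le_lintegral (hQ : IsAEPartition μ Q) {F : X → ℝ≥0∞} {c : ι → ℝ≥0∞}
    (h : ∀ k, ∀ x ∈ Q k, c k ≤ F x) : ∑ k, c k * μ (Q k) ≤ ∫⁻ x, F x ∂μ := by
  conv_rhs => rw [← hQ.sum_restrict]
  rw [lintegral_finsetSum_measure]
  refine Finset.sum_le_sum fun k _ => ?_
  rw [← setLIntegral_const]
  exact setLIntegral_mono' (hQ.measurableSet k) (h k)

lemma integral_le_sum_mul [IsFiniteMeasure μ] (hQ : IsAEPartition μ Q) {F : X → ℝ}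
    (hF : Integrable F μ) {c : ι → ℝ} (h : ∀ k, ∀ x ∈ Q k, F x ≤ c k) :
    ∫ x, F x ∂μ ≤ ∑ k, μ.real (Q k) * c k := by
  conv_lhs => rw [← hQ.sum_restrict]
  rw [integral_finsetSum_measure fun k _ => hF.restrict]
  refine Finset.sum_le_sum fun k _ => ?_
  rw [← smul_eq_mul, ← setIntegral_const]
  exact setIntegral_mono_on hF.integrableOn (integrable_const _) (hQ.measurableSet k) (h k)

lemma sum_mul_le_integral [IsFiniteMeasure μ] (hQ : IsAEPartition μ Q) {F : X → ℝ}
    (hF : Integrable F μ) {c : ι → ℝ} (h : ∀ k, ∀ x ∈ Q k, c k ≤ F x) :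
    ∑ k, μ.real (Q k) * c k ≤ ∫ x, F x ∂μ := by
  have := hQ.integral_le_sum_mul hF.neg (c := fun k => -c k) fun k x hx => neg_le_neg (h k x hx)
  simpa [integral_neg] using this

lemma isTransportPlan {π : Measure (X × Y)} [IsFiniteMeasure π]
    (hQ : IsAEPartition (π.map Prod.fst) Q) (hR : IsAEPartition (π.map Prod.snd) R) :
    IsTransportPlan (fun k => (π.map Prod.fst).real (Q k)) (fun l => (π.map Prod.snd).real (R l))
      fun a => π.real (Q a.1 ×ˢ R a.2) where
  nonneg _ := measureReal_nonneg
  sum_snd k := by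
    rw [map_measureReal_apply measurable_fst (hQ.measurableSet k),
      ← (hR.preimage measurable_snd).sum_measureReal_inter]
    rfl
  sum_fst l := by
    rw [map_measureReal_apply measurable_snd (hR.measurableSet l),
      ← (hQ.preimage measurable_fst).sum_measureReal_inter]
    simp only [inter_comm, Set.prod_eq]

end IsAEPartition

open scoped ProbabilityTheory

/-- The coupling which, for each pair of cells `(Q k, R l)`, spreads the mass `p (k, l)` over
`Q k × R l` as the product of the normalised restrictions of `μ` and `ν`. -/
noncomputable def planCoupling (μ : Measure X) (ν : Measure Y) (Q : ι → Set X) (R : κ → Set Y)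
    (p : ι × κ → ℝ) : Measure (X × Y) :=
  ∑ a, ENNReal.ofReal (p a) • (μ[|Q a.1]).prod (ν[|R a.2])

lemma sum_ofReal_smul_cond [IsFiniteMeasure μ] (hQ : IsAEPartition μ Q) :
    ∑ k, ENNReal.ofReal (μ.real (Q k)) • μ[|Q k] = μ := by
  conv_rhs => rw [← hQ.sum_restrict]
  refine Finset.sum_congr rfl fun k _ => ?_
  rw [ofReal_measureReal, ProbabilityTheory.cond, smul_smul]
  rcases eq_or_ne (μ (Q k)) 0 with h | h
  · rw [h, zero_mul, zero_smul, Measure.restrict_eq_zero.2 h]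
  · rw [ENNReal.mul_inv_cancel h (measure_ne_top μ _), one_smul]

namespace IsTransportPlan

variable [IsProbabilityMeasure μ] [IsProbabilityMeasure ν] {p : ι × κ → ℝ}

lemma map_fst_planCoupling (hQ : IsAEPartition μ Q)
    (hp : IsTransportPlan (fun k => μ.real (Q k)) (fun l => ν.real (R l)) p) :
    (planCoupling μ ν Q R p).map Prod.fst = μ := by
  have hterm (a : ι × κ) : (ENNReal.ofReal (p a) • (μ[|Q a.1]).prod (ν[|R a.2])).map Prod.fst =
      ENNReal.ofReal (p a) • μ[|Q a.1] := by
    rcases eq_or_ne (ν.real (R a.2)) 0 with h | h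
    · simp [hp.eq_zero_of_snd h]
    · have := ProbabilityTheory.cond_isProbabilityMeasure
        (measureReal_ne_zero_iff (by finiteness) |>.1 h)
      rw [Measure.map_smul, ← Measure.fst, Measure.fst_prod]
  rw [planCoupling, ← Measure.mapₗ_apply_of_measurable measurable_fst, map_sum]
  simp only [Measure.mapₗ_apply_of_measurable measurable_fst, hterm, Fintype.sum_prod_type,
    ← Finset.sum_smul, ← ENNReal.ofReal_sum_of_nonneg fun _ _ => hp.nonneg _, hp.sum_snd]
  exact sum_ofReal_smul_cond hQ

lemma map_snd_planCoupling (hR : IsAEPartition ν R)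
    (hp : IsTransportPlan (fun k => μ.real (Q k)) (fun l => ν.real (R l)) p) :
    (planCoupling μ ν Q R p).map Prod.snd = ν := by
  have hterm (a : ι × κ) : (ENNReal.ofReal (p a) • (μ[|Q a.1]).prod (ν[|R a.2])).map Prod.snd =
      ENNReal.ofReal (p a) • ν[|R a.2] := by
    rcases eq_or_ne (μ.real (Q a.1)) 0 with h | h
    · simp [hp.eq_zero_of_fst h]
    · have := ProbabilityTheory.cond_isProbabilityMeasure
        (measureReal_ne_zero_iff (by finiteness) |>.1 h)
      rw [Measure.map_smul, ← Measure.snd, Measure.snd_prod]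
  rw [planCoupling, ← Measure.mapₗ_apply_of_measurable measurable_snd, map_sum]
  simp only [Measure.mapₗ_apply_of_measurable measurable_snd, hterm, Fintype.sum_prod_type_right,
    ← Finset.sum_smul, ← ENNReal.ofReal_sum_of_nonneg fun _ _ => hp.nonneg _, hp.sum_fst]
  exact sum_ofReal_smul_cond hR

end IsTransportPlan

lemma lintegral_planCoupling_le (hQ : ∀ k, MeasurableSet (Q k)) (hR : ∀ l, MeasurableSet (R l))
    (p : ι × κ → ℝ) {F : X × Y → ℝ≥0∞} {c : ι × κ → ℝ≥0∞}
    (h : ∀ a, ∀ x ∈ Q a.1, ∀ y ∈ R a.2, F (x, y) ≤ c a) :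
    ∫⁻ z, F z ∂planCoupling μ ν Q R p ≤ ∑ a, ENNReal.ofReal (p a) * c a := by
  rw [planCoupling, lintegral_finsetSum_measure]
  refine Finset.sum_le_sum fun a _ => ?_
  rw [lintegral_smul_measure, smul_eq_mul]
  gcongr
  have hmem : ∀ᵐ z ∂(μ[|Q a.1]).prod (ν[|R a.2]), F z ≤ c a := by
    filter_upwards [Measure.quasiMeasurePreserving_fst.ae (ProbabilityTheory.ae_cond_mem (hQ a.1)),
      Measure.quasiMeasurePreserving_snd.ae (ProbabilityTheory.ae_cond_mem (hR a.2))] with z h₁ h₂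
    exact h a z.1 h₁ z.2 h₂
  calc ∫⁻ z, F z ∂(μ[|Q a.1]).prod (ν[|R a.2])
      ≤ ∫⁻ _, c a ∂(μ[|Q a.1]).prod (ν[|R a.2]) := lintegral_mono_ae hmem
    _ ≤ c a := by
        rw [lintegral_const, ← univ_prod_univ, Measure.prod_prod]
        exact mul_le_of_le_one_right' (mul_le_one' prob_le_one prob_le_one)

end Coupling

/-! ### Soft minimum and the regularised Hopf–Lax formula -/

section SoftMin

variable {ι : Type*} [Fintype ι]

/-- The smooth approximation `-ε log ∑ exp (-a k / ε)` of the minimum of a finite family; it is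
within `ε log (card ι)` of the minimum. -/
noncomputable def softMin (ε : ℝ) (a : ι → ℝ) : ℝ := -ε * Real.log (∑ k, Real.exp (-a k / ε))

/-- The weights with which the derivatives of the `a k` enter the derivative of their soft
minimum. -/
noncomputable def gibbsWeight (ε : ℝ) (a : ι → ℝ) (k : ι) : ℝ :=
  Real.exp (-a k / ε) / ∑ l, Real.exp (-a l / ε)

lemma softMin_le {ε : ℝ} (hε : 0 < ε) (a : ι → ℝ) (k : ι) : softMin ε a ≤ a k := by
  have h : -a k / ε ≤ Real.log (∑ k, Real.exp (-a k / ε)) :=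
    (Real.log_exp _).symm.trans_le <| Real.log_le_log (Real.exp_pos _) <|
      Finset.single_le_sum (f := fun k => Real.exp (-a k / ε)) (fun _ _ => (Real.exp_pos _).le)
        (Finset.mem_univ k)
  rw [div_le_iff₀ hε] at h
  rw [softMin]
  linarith

variable [Nonempty ι]

lemma sum_exp_pos (a : ι → ℝ) : 0 < ∑ k, Real.exp (a k) :=
  Finset.sum_pos (fun _ _ => Real.exp_pos _) Finset.univ_nonempty

lemma le_softMin {ε : ℝ} (hε : 0 < ε) {a : ι → ℝ} {g : ℝ} (h : ∀ k, g ≤ a k) :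
    g - ε * Real.log (Fintype.card ι) ≤ softMin ε a := by
  have hsum : ∑ k, Real.exp (-a k / ε) ≤ Fintype.card ι * Real.exp (-g / ε) := by
    rw [← nsmul_eq_mul]
    refine Finset.sum_le_card_nsmul _ _ _ fun k _ => Real.exp_le_exp.2 ?_
    gcongr
    exact h k
  have hlog := Real.log_le_log (sum_exp_pos _) hsum
  rw [Real.log_mul (by positivity) (Real.exp_pos _).ne', Real.log_exp] at hlog
  calc g - ε * Real.log (Fintype.card ι)
      = -ε * (Real.log (Fintype.card ι) + -g / ε) := by field_simp; ring
    _ ≤ softMin ε a := mul_le_mul_of_nonpos_left hlog (neg_nonpos.2 hε.le)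

lemma gibbsWeight_mem_stdSimplex (ε : ℝ) (a : ι → ℝ) : gibbsWeight ε a ∈ stdSimplex ℝ ι := by
  refine ⟨fun k => div_nonneg (Real.exp_pos _).le (sum_exp_pos _).le, ?_⟩
  simp only [gibbsWeight, ← Finset.sum_div, div_self (sum_exp_pos _).ne']

variable {V : Type*} [NormedAddCommGroup V] [NormedSpace ℝ V]

lemma contDiff_softMin {n : WithTop ℕ∞} {ε : ℝ} {a : V → ι → ℝ}
    (ha : ∀ k, ContDiff ℝ n fun z => a z k) : ContDiff ℝ n fun z => softMin ε (a z) :=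
  contDiff_const.mul <| (ContDiff.sum fun k _ => ((ha k).neg.div_const ε).exp).log
    fun _ => (sum_exp_pos _).ne'

lemma hasFDerivAt_softMin {ε : ℝ} (hε : ε ≠ 0) {a : V → ι → ℝ} {a' : ι → V →L[ℝ] ℝ} {z : V}
    (ha : ∀ k, HasFDerivAt (fun z => a z k) (a' k) z) :
    HasFDerivAt (fun z => softMin ε (a z)) (∑ k, gibbsWeight ε (a z) k • a' k) z := by
  have hsum : HasFDerivAt (fun z => ∑ k, Real.exp (-a z k / ε))
      (∑ k, Real.exp (-a z k / ε) • ε⁻¹ • -a' k) z :=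
    HasFDerivAt.fun_sum fun k _ => by
      simpa only [div_eq_inv_mul] using ((ha k).fun_neg.const_mul ε⁻¹).exp
  refine ((hsum.log (sum_exp_pos _).ne').const_mul (-ε)).congr_fderiv ?_
  simp only [Finset.smul_sum, gibbsWeight]
  refine Finset.sum_congr rfl fun k _ => ?_
  simp only [smul_neg, smul_smul, ← neg_smul]
  congr 1
  field_simp

lemma fderiv_softMin_le {ε : ℝ} (hε : ε ≠ 0) {a : V → ι → ℝ} {z v : V} {K : ℝ}
    (ha : ∀ k, DifferentiableAt ℝ (fun z => a z k) z)
    (hK : ∀ k, fderiv ℝ (fun z => a z k) z v ≤ K) :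
    fderiv ℝ (fun z => softMin ε (a z)) z v ≤ K := by
  obtain ⟨hpos, hsum⟩ := gibbsWeight_mem_stdSimplex ε (a z)
  rw [(hasFDerivAt_softMin hε fun k => (ha k).hasFDerivAt).fderiv]
  simp only [sum_apply, smul_apply, smul_eq_mul]
  calc ∑ k, gibbsWeight ε (a z) k * fderiv ℝ (fun z => a z k) z v
      ≤ ∑ k, gibbsWeight ε (a z) k * K :=
        Finset.sum_le_sum fun k _ => mul_le_mul_of_nonneg_left (hK k) (hpos k)
    _ = K := by rw [← Finset.sum_mul, hsum, one_mul]

end SoftMin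

section HopfLax

variable {E ι : Type*} [NormedAddCommGroup E] [Fintype ι]

/-- The Hopf–Lax solution `y ↦ min_k (f k + ‖y - x k‖² / (2 b))` at time `b` of the
Hamilton–Jacobi equation `∂_b u + |∇u|² / 2 = 0`, with the minimum replaced by `softMin ε`. -/
noncomputable def softHopfLax (x : ι → E) (f : ι → ℝ) (ε : ℝ) (y : E) (b : ℝ) : ℝ :=
  softMin ε fun k => f k + ‖y - x k‖ ^ 2 / (2 * b)

variable [Nonempty ι]

lemma exists_le_softHopfLax (x : ι → E) (f : ι → ℝ) {ε : ℝ} (hε : 0 < ε) (B : ℝ) :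
    ∃ L, ∀ y b, 0 < b → b ≤ B → ‖y‖ ^ 2 / (4 * B) - L ≤ softHopfLax x f ε y b := by
  obtain ⟨L, hL⟩ := (finite_range fun k => ‖x k‖ ^ 2 / (2 * B) - f k).bddAbove
  refine ⟨L + ε * Real.log (Fintype.card ι), fun y b hb hbB => ?_⟩
  rw [← sub_sub]
  refine le_softMin hε fun k => ?_
  have hB : 0 < B := hb.trans_le hbB
  have hpar : ‖y‖ ^ 2 ≤ 2 * ‖y - x k‖ ^ 2 + 2 * ‖x k‖ ^ 2 := by
    have h := norm_le_norm_sub_add y (x k)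
    nlinarith [sq_nonneg (‖y - x k‖ - ‖x k‖), norm_nonneg y]
  have hdiv : ‖y - x k‖ ^ 2 / (2 * B) ≤ ‖y - x k‖ ^ 2 / (2 * b) := by gcongr
  have hpar' : ‖y‖ ^ 2 / (4 * B) ≤ ‖y - x k‖ ^ 2 / (2 * B) + ‖x k‖ ^ 2 / (2 * B) := by
    rw [← add_div, div_le_div_iff₀ (by positivity) (by positivity)]
    nlinarith
  linarith [hL (mem_range_self k)]

lemma continuous_softHopfLax (x : ι → E) (f : ι → ℝ) (ε b : ℝ) :
    Continuous fun y => softHopfLax x f ε y b := by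
  unfold softHopfLax softMin
  exact continuous_const.mul (Continuous.log (by fun_prop) fun _ => (sum_exp_pos _).ne')

variable [InnerProductSpace ℝ E]

lemma differentiableAt_const_add_norm_sub_sq_div (r : ℝ) (x : E) {c : ℝ → ℝ} {t : ℝ}
    (hc : DifferentiableAt ℝ c t) (hct : c t ≠ 0) (y : E) :
    DifferentiableAt ℝ (fun z : E × ℝ => r + ‖z.1 - x‖ ^ 2 / (2 * c z.2)) (y, t) := by
  have hnum : DifferentiableAt ℝ (fun z : E × ℝ => ‖z.1 - x‖ ^ 2) (y, t) :=
    (differentiableAt_fst.sub_const x).norm_sq ℝ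
  have hden : DifferentiableAt ℝ (fun z : E × ℝ => 2 * c z.2) (y, t) :=
    (DifferentiableAt.comp (y, t) (g := c) hc differentiableAt_snd).const_mul 2
  simp only [div_eq_mul_inv]
  exact (hnum.mul (hden.fun_inv (mul_ne_zero two_ne_zero hct))).const_add r

lemma fderiv_norm_sub_sq_div_le (r : ℝ) (x : E) {c : ℝ → ℝ} {t : ℝ} (hc : HasDerivAt c 1 t)
    (hct : 0 < c t) (y w : E) :
    fderiv ℝ (fun z : E × ℝ => r + ‖z.1 - x‖ ^ 2 / (2 * c z.2)) (y, t) (w, 1) ≤ ‖w‖ ^ 2 / 2 := by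
  have hnum : HasDerivAt (fun s : ℝ => ‖y + s • w - x‖ ^ 2) (2 * ⟪y - x, w⟫) 0 := by
    simpa using ((((hasDerivAt_id (0 : ℝ)).smul_const w).const_add y).sub_const x).norm_sq
  have hden : HasDerivAt (fun s : ℝ => c (t + s)) 1 0 :=
    HasDerivAt.comp_const_add t 0 (by simpa using hc)
  have hline : HasLineDerivAt ℝ (fun z : E × ℝ => r + ‖z.1 - x‖ ^ 2 / (2 * c z.2))
      ((2 * ⟪y - x, w⟫ * (2 * c t) - ‖y - x‖ ^ 2 * 2) / (2 * c t) ^ 2) (y, t) (w, 1) := by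
    simpa [HasLineDerivAt] using
      (hnum.fun_div (hden.const_mul 2) (by simpa using hct.ne')).const_add r
  rw [← (differentiableAt_const_add_norm_sub_sq_div r x hc.differentiableAt hct.ne'
    y).lineDeriv_eq_fderiv, hline.lineDeriv, div_le_iff₀ (by positivity)]
  have hsq : 0 ≤ ‖(y - x) - c t • w‖ ^ 2 := by positivity
  rw [norm_sub_sq_real, norm_smul, inner_smul_right, Real.norm_eq_abs, mul_pow, sq_abs] at hsq
  linarith

lemma contDiff_softHopfLax (x : ι → E) (f : ι → ℝ) (ε : ℝ) {n : WithTop ℕ∞} {c : ℝ → ℝ}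
    (hc : ContDiff ℝ n c) (hc0 : ∀ t, 0 < c t) :
    ContDiff ℝ n fun z : E × ℝ => softHopfLax x f ε z.1 (c z.2) := by
  refine contDiff_softMin fun k => contDiff_const.add (ContDiff.div ?_ ?_ fun z => ?_)
  · exact (contDiff_fst.sub contDiff_const).norm_sq ℝ
  · exact contDiff_const.mul (hc.comp contDiff_snd)
  · exact mul_ne_zero two_ne_zero (hc0 z.2).ne'

lemma fderiv_softHopfLax_le (x : ι → E) (f : ι → ℝ) {ε : ℝ} (hε : ε ≠ 0) {c : ℝ → ℝ} {t : ℝ}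
    (hc : HasDerivAt c 1 t) (hct : 0 < c t) (y w : E) :
    fderiv ℝ (fun z : E × ℝ => softHopfLax x f ε z.1 (c z.2)) (y, t) (w, 1) ≤ ‖w‖ ^ 2 / 2 :=
  fderiv_softMin_le hε
    (fun k => differentiableAt_const_add_norm_sub_sq_div (f k) (x k) hc.differentiableAt hct.ne' y)
    fun k => fderiv_norm_sub_sq_div_le (f k) (x k) hc hct y w

end HopfLax

section Cutoffs

/-- A smooth nondecreasing function with slope at most one which vanishes on `[1, ∞)` and has slope
one on `(-∞, 0]`. -/
noncomputable def smoothRamp (s : ℝ) : ℝ := ∫ u in (1 : ℝ)..s, Real.smoothTransition (1 - u)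

lemma hasDerivAt_smoothRamp (s : ℝ) :
    HasDerivAt smoothRamp (Real.smoothTransition (1 - s)) s := by
  have h : Continuous fun u => Real.smoothTransition (1 - u) := by fun_prop
  exact intervalIntegral.integral_hasDerivAt_right (h.intervalIntegrable _ _)
    (h.stronglyMeasurableAtFilter _ _) h.continuousAt

lemma contDiff_smoothRamp : ContDiff ℝ (⊤ : ℕ∞) smoothRamp := by
  refine contDiff_infty_iff_deriv.2 ⟨fun s => (hasDerivAt_smoothRamp s).differentiableAt, ?_⟩
  rw [funext fun s => (hasDerivAt_smoothRamp s).deriv]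
  exact Real.smoothTransition.contDiff.comp (by fun_prop)

lemma smoothRamp_of_one_le {s : ℝ} (hs : 1 ≤ s) : smoothRamp s = 0 := by
  rw [smoothRamp, ← intervalIntegral.integral_zero (μ := volume) (a := 1) (b := s)]
  refine intervalIntegral.integral_congr fun u hu => ?_
  rw [uIcc_of_le hs] at hu
  exact Real.smoothTransition.zero_of_nonpos (by linarith [hu.1])

lemma smoothRamp_of_nonpos {s : ℝ} (hs : s ≤ 0) : smoothRamp s = s + smoothRamp 0 := by
  have h : Continuous fun u => Real.smoothTransition (1 - u) := by fun_prop
  have hone : ∫ u in s..0, Real.smoothTransition (1 - u) = ∫ _ in s..0, (1 : ℝ) := by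
    refine intervalIntegral.integral_congr fun u hu => ?_
    rw [uIcc_of_le hs] at hu
    exact Real.smoothTransition.one_of_one_le (by linarith [hu.2])
  have hadd : smoothRamp s + ∫ u in s..0, Real.smoothTransition (1 - u) = smoothRamp 0 :=
    intervalIntegral.integral_add_adjacent_intervals (h.intervalIntegrable _ _)
      (h.intervalIntegrable _ _)
  rw [hone, intervalIntegral.integral_const, smul_eq_mul] at hadd
  linarith

/-- A smooth positive function which equals `t + δ` for `t ≥ 0`. -/
noncomputable def smoothClock (δ t : ℝ) : ℝ :=
  Real.smoothTransition (1 + 2 * t / δ) * (t + δ) + (1 - Real.smoothTransition (1 + 2 * t / δ))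

lemma contDiff_smoothClock (δ : ℝ) : ContDiff ℝ (⊤ : ℕ∞) (smoothClock δ) := by
  have h : ContDiff ℝ (⊤ : ℕ∞) fun t => Real.smoothTransition (1 + 2 * t / δ) :=
    Real.smoothTransition.contDiff.comp (by fun_prop)
  exact (h.mul (by fun_prop)).add (contDiff_const.sub h)

variable {δ : ℝ} (hδ : 0 < δ)
include hδ

lemma smoothClock_of_nonneg {t : ℝ} (ht : 0 ≤ t) : smoothClock δ t = t + δ := by
  have h : Real.smoothTransition (1 + 2 * t / δ) = 1 :=
    Real.smoothTransition.one_of_one_le (le_add_of_nonneg_right (by positivity))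
  rw [smoothClock, h]
  ring

lemma smoothClock_pos (t : ℝ) : 0 < smoothClock δ t := by
  have h₁ := Real.smoothTransition.le_one (1 + 2 * t / δ)
  rw [smoothClock]
  rcases le_or_gt (1 + 2 * t / δ) 0 with h | h
  · simp [Real.smoothTransition.zero_of_nonpos h]
  · have hpos := Real.smoothTransition.pos_of_pos h
    have ht : 0 < t + δ := by
      field_simp at h
      linarith
    nlinarith [mul_pos hpos ht]

lemma hasDerivAt_smoothClock {t : ℝ} (ht : 0 < t) : HasDerivAt (smoothClock δ) 1 t := by
  refine ((hasDerivAt_id t).add_const δ).congr_of_eventuallyEq ?_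
  filter_upwards [lt_mem_nhds ht] with s hs using smoothClock_of_nonneg hδ hs.le

end Cutoffs

/-! ### Paths of uniform densities -/

lemma deriv_add_inner_gradient {E : Type*} [NormedAddCommGroup E] [InnerProductSpace ℝ E]
    [CompleteSpace E] {q : E × ℝ → ℝ} {x : E} {t : ℝ} (hq : DifferentiableAt ℝ q (x, t))
    (w : E) :
    deriv (fun s => q (x, s)) t + ⟪w, gradient (fun y => q (y, t)) x⟫ =
      fderiv ℝ q (x, t) (w, 1) := by
  have htime : HasDerivAt (fun s => q (x, s)) (fderiv ℝ q (x, t) (0, 1)) t :=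
    hq.hasFDerivAt.comp_hasDerivAt t ((hasDerivAt_const t x).prodMk (hasDerivAt_id t))
  have hspace : HasFDerivAt (fun y => q (y, t)) _ x :=
    hq.hasFDerivAt.comp x (hasFDerivAt_prodMk_left x t)
  rw [htime.deriv, real_inner_comm, gradient, InnerProductSpace.toDual_symm_apply, hspace.fderiv]
  simp [← map_add]

lemma integral_cond_eq_inv_mul {X : Type*} {m : MeasurableSpace X} (μ : Measure X) (f : X → ℝ)
    (s : Set X) :
    ∫ x, f x ∂ProbabilityTheory.cond μ s = (μ s).toReal⁻¹ * ∫ x in s, f x ∂μ := by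
  rw [ProbabilityTheory.cond, integral_smul_measure, ENNReal.toReal_inv, smul_eq_mul]

section UniformPath

variable {E : Type*} [NormedAddCommGroup E] [InnerProductSpace ℝ E] [FiniteDimensional ℝ E]
  [MeasurableSpace E] [BorelSpace E]

/-- `f` is almost everywhere a uniform probability density on a bounded set of positive volume. -/
def IsUniformDensity (f : E → ℝ) : Prop :=
  ∃ (A : Set E) (c : ℝ), MeasurableSet A ∧ Bornology.IsBounded A ∧ 0 < volume A ∧ 0 < c ∧
    (∀ᵐ x, f x = c * A.indicator (fun _ => (1 : ℝ)) x) ∧ ∫ x, f x = 1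

/-- The kinetic action `∫∫ ρ |v|²` over the time interval `[α, β]`. -/
noncomputable def action (α β : ℝ) (ρ : E → ℝ → ℝ) (v : E → ℝ → E) : ℝ≥0∞ :=
  ∫⁻ z, ENNReal.ofReal (ρ z.1 z.2 * ‖v z.1 z.2‖ ^ 2)
    ∂((volume : Measure E).prod (volume.restrict (Icc α β)))

/-- The weak continuity equation `∂_t ρ + div (ρ v) = 0` on `[α, β]` with initial measure `μ` and
final measure `ν`. The integrand `∂_t q + v · ∇q` is encoded as `fderiv ℝ q (x, t) (v, 1)`. -/
def IsWeakSolution (α β : ℝ) (ρ : E → ℝ → ℝ) (v : E → ℝ → E) (μ ν : Measure E) : Prop :=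
  ∀ q : E × ℝ → ℝ, ContDiff ℝ (⊤ : ℕ∞) q → HasCompactSupport q →
    ∫ t in Icc α β, ∫ x, ρ x t * fderiv ℝ q (x, t) (v x t, 1) =
      ∫ x, q (x, β) ∂ν - ∫ x, q (x, α) ∂μ

/-- The admissible pairs of the shape distance, on a time interval `[α, β]` and with arbitrary
measures as endpoints. -/
structure IsUniformPath (α β : ℝ) (ρ : E → ℝ → ℝ) (v : E → ℝ → E) (μ ν : Measure E) : Prop where
  measurable_density : Measurable fun z : E × ℝ => ρ z.1 z.2
  measurable_velocity : Measurable fun z : E × ℝ => v z.1 z.2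
  density_nonneg : ∀ x t, 0 ≤ ρ x t
  isUniformDensity : ∀ᵐ t ∂volume.restrict (Icc α β), IsUniformDensity fun x => ρ x t
  action_lt_top : action α β ρ v < ⊤
  isWeakSolution : IsWeakSolution α β ρ v μ ν

lemma uniformAdmissible_iff {d : ℕ} {Ω₀ Ω₁ : Set (EuclideanSpace ℝ (Fin d))}
    {ρ : EuclideanSpace ℝ (Fin d) → ℝ → ℝ}
    {v : EuclideanSpace ℝ (Fin d) → ℝ → EuclideanSpace ℝ (Fin d)} :
    UniformAdmissible Ω₀ Ω₁ ρ v ↔ IsUniformPath 0 1 ρ v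
      (ProbabilityTheory.cond volume Ω₀) (ProbabilityTheory.cond volume Ω₁) := by
  have hweak (q : EuclideanSpace ℝ (Fin d) × ℝ → ℝ) (hq : ContDiff ℝ (⊤ : ℕ∞) q) (t : ℝ)
      (x : EuclideanSpace ℝ (Fin d)) := deriv_add_inner_gradient (w := v x t)
    (hq.differentiable (by simp) (x, t))
  constructor
  · rintro ⟨hρ, hv, hρ0, huniform, haction, hsol⟩
    refine ⟨hρ, hv, hρ0, huniform, haction, fun q hq hqc => ?_⟩
    simp only [integral_cond_eq_inv_mul, ← hweak q hq]
    exact hsol (fun x t => q (x, t)) hq hqc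
  · rintro ⟨hρ, hv, hρ0, huniform, haction, hsol⟩
    refine ⟨hρ, hv, hρ0, huniform, haction, fun q hq hqc => ?_⟩
    have h := hsol _ hq hqc
    simp only [integral_cond_eq_inv_mul, ← hweak _ hq] at h
    exact h

namespace IsUniformPath

variable {α β : ℝ} {ρ : E → ℝ → ℝ} {v : E → ℝ → E} {μ ν : Measure E}

lemma kinetic_nonneg (h : IsUniformPath α β ρ v μ ν) (z : E × ℝ) :
    0 ≤ ρ z.1 z.2 * ‖v z.1 z.2‖ ^ 2 := mul_nonneg (h.density_nonneg _ _) (sq_nonneg _)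

lemma measurable_kinetic (h : IsUniformPath α β ρ v μ ν) :
    Measurable fun z : E × ℝ => ρ z.1 z.2 * ‖v z.1 z.2‖ ^ 2 :=
  h.measurable_density.mul (h.measurable_velocity.norm.pow_const 2)

lemma integrable_kinetic (h : IsUniformPath α β ρ v μ ν) :
    Integrable (fun z : E × ℝ => ρ z.1 z.2 * ‖v z.1 z.2‖ ^ 2)
      ((volume : Measure E).prod (volume.restrict (Icc α β))) := by
  refine ⟨h.measurable_kinetic.aestronglyMeasurable, ?_⟩
  rw [hasFiniteIntegral_iff_ofReal (.of_forall h.kinetic_nonneg)]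
  exact h.action_lt_top

lemma toReal_action (h : IsUniformPath α β ρ v μ ν) :
    (action α β ρ v).toReal = ∫ t in Icc α β, ∫ x, ρ x t * ‖v x t‖ ^ 2 := by
  rw [← integral_prod_symm _ h.integrable_kinetic, integral_eq_lintegral_of_nonneg_ae
    (.of_forall h.kinetic_nonneg) h.measurable_kinetic.aestronglyMeasurable]
  rfl

lemma integrable_density (h : IsUniformPath α β ρ v μ ν) :
    Integrable (fun z : E × ℝ => ρ z.1 z.2)
      ((volume : Measure E).prod (volume.restrict (Icc α β))) := by
  have hint : ∀ᵐ t ∂volume.restrict (Icc α β), ∫ x, ρ x t = 1 :=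
    h.isUniformDensity.mono fun t ⟨_, _, _, _, _, _, _, ht⟩ => ht
  refine (integrable_prod_iff' h.measurable_density.aestronglyMeasurable).2 ⟨?_, ?_⟩
  · exact hint.mono fun t ht => integrable_of_integral_eq_one ht
  · refine (integrable_const (1 : ℝ)).congr (hint.mono fun t ht => ?_)
    simp only [Real.norm_of_nonneg (h.density_nonneg _ _), ht]

lemma integrable_mul_fderiv (h : IsUniformPath α β ρ v μ ν) {q : E × ℝ → ℝ}
    (hq : ContDiff ℝ (⊤ : ℕ∞) q) (hqc : HasCompactSupport q) :
    Integrable (fun z : E × ℝ => ρ z.1 z.2 * fderiv ℝ q z (v z.1 z.2, 1))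
      ((volume : Measure E).prod (volume.restrict (Icc α β))) := by
  have hq1 : ContDiff ℝ 1 q := hq.of_le (by exact_mod_cast le_top)
  obtain ⟨K, hK⟩ : ∃ K, ∀ z, ‖fderiv ℝ q z‖ ≤ K :=
    (hq1.continuous_fderiv one_ne_zero).bounded_above_of_compact_support (hqc.fderiv ℝ)
  have hmeas : Measurable fun z : E × ℝ => fderiv ℝ q z (v z.1 z.2, 1) := by
    have hcont := hq1.continuous_fderiv_apply one_ne_zero
    exact hcont.measurable.comp
      (measurable_id.prodMk (h.measurable_velocity.prodMk measurable_const))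
  refine (((h.integrable_density.const_mul 2).add h.integrable_kinetic).const_mul K).mono'
    (h.measurable_density.mul hmeas).aestronglyMeasurable (.of_forall fun z => ?_)
  have hρ := h.density_nonneg z.1 z.2
  have hv : ‖(v z.1 z.2, (1 : ℝ))‖ ≤ 2 + ‖v z.1 z.2‖ ^ 2 := by
    rw [Prod.norm_def, norm_one]
    exact max_le (by nlinarith [sq_nonneg (‖v z.1 z.2‖ - 1)]) (by nlinarith [sq_nonneg ‖v z.1 z.2‖])
  have hfderiv : ‖fderiv ℝ q z (v z.1 z.2, 1)‖ ≤ K * (2 + ‖v z.1 z.2‖ ^ 2) :=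
    (fderiv ℝ q z).le_of_opNorm_le_of_le (hK z) hv
  calc ‖ρ z.1 z.2 * fderiv ℝ q z (v z.1 z.2, 1)‖
      = ρ z.1 z.2 * ‖fderiv ℝ q z (v z.1 z.2, 1)‖ := by rw [norm_mul, Real.norm_of_nonneg hρ]
    _ ≤ ρ z.1 z.2 * (K * (2 + ‖v z.1 z.2‖ ^ 2)) := mul_le_mul_of_nonneg_left hfderiv hρ
    _ = K * (2 * ρ z.1 z.2 + ρ z.1 z.2 * ‖v z.1 z.2‖ ^ 2) := by ring

/-- Testing the continuity equation with a subsolution of the Hamilton–Jacobi equation bounds the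
action from below. -/
lemma integral_sub_integral_le (h : IsUniformPath α β ρ v μ ν) {q : E × ℝ → ℝ}
    (hq : ContDiff ℝ (⊤ : ℕ∞) q) (hqc : HasCompactSupport q)
    (hsub : ∀ t ∈ Ioo α β, ∀ x w, fderiv ℝ q (x, t) (w, 1) ≤ ‖w‖ ^ 2 / 2) :
    ∫ x, q (x, β) ∂ν - ∫ x, q (x, α) ∂μ ≤ (action α β ρ v).toReal / 2 := by
  have hint := h.integrable_mul_fderiv hq hqc
  have hkin := h.integrable_kinetic
  have hIoo : ∀ᵐ t ∂volume.restrict (Icc α β), t ∈ Ioo α β := by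
    rw [← restrict_Ioo_eq_restrict_Icc]
    exact ae_restrict_mem measurableSet_Ioo
  rw [← h.isWeakSolution q hq hqc, h.toReal_action, ← integral_div]
  refine integral_mono_ae hint.integral_prod_right (hkin.integral_prod_right.div_const 2) ?_
  filter_upwards [hIoo, hint.prod_left_ae, hkin.prod_left_ae] with t ht hint_t hkin_t
  rw [← integral_div]
  refine integral_mono hint_t (hkin_t.div_const 2) fun x => ?_
  rw [mul_div_assoc]
  exact mul_le_mul_of_nonneg_left (hsub t ht x _) (h.density_nonneg x t)

end IsUniformPath

end UniformPath

section CutoffHopfLax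

/-- A smooth cutoff in time which equals one on a neighbourhood of `[0, 1]`. -/
noncomputable def timeCutoff : ContDiffBump (1 / 2 : ℝ) := ⟨1, 2, one_pos, one_lt_two⟩

lemma timeCutoff_eventuallyEq_one {t : ℝ} (ht : t ∈ Icc 0 1) : timeCutoff =ᶠ[nhds t] 1 := by
  refine timeCutoff.eventuallyEq_one_of_mem_ball ?_
  rw [Metric.mem_ball, Real.dist_eq, abs_lt]
  constructor <;> norm_num [timeCutoff] <;> linarith [ht.1, ht.2]

variable {E ι : Type*} [NormedAddCommGroup E] [Fintype ι]

/-- A compactly supported test function which agrees with `softHopfLax` at time `t + δ`, up to an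
additive constant, where `t ∈ [0, 1]` and `softHopfLax ≤ M`. -/
noncomputable def cutoffHopfLax (x : ι → E) (f : ι → ℝ) (ε δ M : ℝ) (z : E × ℝ) : ℝ :=
  timeCutoff z.2 * smoothRamp (softHopfLax x f ε z.1 (smoothClock δ z.2) - M)

lemma cutoffHopfLax_apply (x : ι → E) (f : ι → ℝ) (ε : ℝ) {δ M : ℝ} (hδ : 0 < δ) {y : E} {t : ℝ}
    (ht : t ∈ Icc 0 1) (hM : softHopfLax x f ε y (t + δ) ≤ M) :
    cutoffHopfLax x f ε δ M (y, t) = softHopfLax x f ε y (t + δ) + (smoothRamp 0 - M) := by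
  rw [cutoffHopfLax, (timeCutoff_eventuallyEq_one ht).eq_of_nhds, Pi.one_apply, one_mul,
    smoothClock_of_nonneg hδ ht.1, smoothRamp_of_nonpos (sub_nonpos.2 hM)]
  ring

variable [Nonempty ι] (x : ι → E) (f : ι → ℝ) {ε δ : ℝ}

lemma hasCompactSupport_cutoffHopfLax [ProperSpace E] (hε : 0 < ε) (hδ : 0 < δ) (M : ℝ) :
    HasCompactSupport (cutoffHopfLax x f ε δ M) := by
  obtain ⟨B, hB⟩ := (isCompact_closedBall (1 / 2 : ℝ) 2).bddAbove_image
    (contDiff_smoothClock δ).continuous.continuousOn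
  obtain ⟨L, hL⟩ := exists_le_softHopfLax x f hε B
  refine HasCompactSupport.intro ((isCompact_closedBall (0 : E) (1 + |4 * B * (L + M + 1)|)).prod
    (isCompact_closedBall (1 / 2 : ℝ) 2)) fun ⟨y, t⟩ hz => ?_
  rw [cutoffHopfLax, mul_eq_zero]
  by_cases ht : t ∈ Metric.closedBall (1 / 2 : ℝ) 2
  · right
    have hclock : smoothClock δ t ≤ B := hB (mem_image_of_mem _ ht)
    have hB0 : 0 < B := (smoothClock_pos hδ t).trans_le hclock
    have hy : 1 + |4 * B * (L + M + 1)| < ‖y‖ := by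
      simpa using fun h => hz ⟨mem_closedBall_zero_iff.2 h, ht⟩
    have hsq : L + M + 1 ≤ ‖y‖ ^ 2 / (4 * B) := by
      rw [le_div_iff₀ (by positivity)]
      nlinarith [le_abs_self (4 * B * (L + M + 1)), abs_nonneg (4 * B * (L + M + 1))]
    refine smoothRamp_of_one_le ?_
    linarith [hL y _ (smoothClock_pos hδ t) hclock]
  · left
    rw [Metric.mem_closedBall, not_le] at ht
    exact timeCutoff.zero_of_le_dist ht.le

variable [InnerProductSpace ℝ E]

lemma contDiff_cutoffHopfLax (hδ : 0 < δ) (M : ℝ) :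
    ContDiff ℝ (⊤ : ℕ∞) (cutoffHopfLax x f ε δ M) :=
  (timeCutoff.contDiff.comp contDiff_snd).mul <| contDiff_smoothRamp.comp <|
    (contDiff_softHopfLax x f ε (contDiff_smoothClock δ) (smoothClock_pos hδ)).sub contDiff_const

lemma fderiv_cutoffHopfLax_le (hε : 0 < ε) (hδ : 0 < δ) (M : ℝ) {t : ℝ} (ht : t ∈ Ioo 0 1)
    (y w : E) : fderiv ℝ (cutoffHopfLax x f ε δ M) (y, t) (w, 1) ≤ ‖w‖ ^ 2 / 2 := by
  let u : E × ℝ → ℝ := fun z => softHopfLax x f ε z.1 (smoothClock δ z.2)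
  have hcutoff : cutoffHopfLax x f ε δ M =ᶠ[nhds (y, t)] fun z => smoothRamp (u z - M) := by
    filter_upwards [continuousAt_snd.eventually
      (timeCutoff_eventuallyEq_one (Ioo_subset_Icc_self ht))] with z hz
    rw [cutoffHopfLax, hz, Pi.one_apply, one_mul]
  have hu : DifferentiableAt ℝ u (y, t) :=
    (contDiff_softHopfLax x f ε (contDiff_smoothClock δ) (smoothClock_pos hδ)).differentiable
      (by simp) _
  have hramp : HasFDerivAt (fun z => smoothRamp (u z - M))
      (Real.smoothTransition (1 - (u (y, t) - M)) • fderiv ℝ u (y, t)) (y, t) :=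
    (hasDerivAt_smoothRamp _).comp_hasFDerivAt (y, t) (hu.hasFDerivAt.sub_const M)
  rw [hcutoff.fderiv_eq, hramp.fderiv]
  calc Real.smoothTransition (1 - (u (y, t) - M)) * fderiv ℝ u (y, t) (w, 1)
      ≤ Real.smoothTransition (1 - (u (y, t) - M)) * (‖w‖ ^ 2 / 2) :=
        mul_le_mul_of_nonneg_left (fderiv_softHopfLax_le x f hε.ne'
          (hasDerivAt_smoothClock hδ ht.1) (smoothClock_pos hδ t) y w)
          (Real.smoothTransition.nonneg _)
    _ ≤ ‖w‖ ^ 2 / 2 := mul_le_of_le_one_left (by positivity) (Real.smoothTransition.le_one _)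

end CutoffHopfLax

section LowerBound

variable {E : Type*} [NormedAddCommGroup E] [InnerProductSpace ℝ E] [FiniteDimensional ℝ E]
  [MeasurableSpace E] [BorelSpace E]

lemma integrable_of_ae_norm_le {μ : Measure E} [IsFiniteMeasure μ] {R : ℝ}
    (hμ : ∀ᵐ y ∂μ, ‖y‖ ≤ R) {g : E → ℝ} (hg : Continuous g) : Integrable g μ := by
  have hrestrict : μ.restrict (Metric.closedBall 0 R) = μ :=
    Measure.restrict_eq_self_of_ae_mem (by simpa using hμ)
  rw [← hrestrict]
  exact hg.continuousOn.integrableOn_compact (isCompact_closedBall 0 R)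

variable {ι : Type*} [Fintype ι] [Nonempty ι] (x : ι → E) (f : ι → ℝ) {ε δ R : ℝ}

lemma integral_cutoffHopfLax {μ : Measure E} [IsProbabilityMeasure μ] (hμ : ∀ᵐ y ∂μ, ‖y‖ ≤ R)
    (hδ : 0 < δ) {M t : ℝ} (ht : t ∈ Icc 0 1)
    (hM : ∀ y ∈ Metric.closedBall 0 R, softHopfLax x f ε y (t + δ) ≤ M) :
    ∫ y, cutoffHopfLax x f ε δ M (y, t) ∂μ =
      ∫ y, softHopfLax x f ε y (t + δ) ∂μ + (smoothRamp 0 - M) := by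
  rw [integral_congr_ae (g := fun y => softHopfLax x f ε y (t + δ) + (smoothRamp 0 - M)),
    integral_add (integrable_of_ae_norm_le hμ (continuous_softHopfLax x f ε (t + δ)))
      (integrable_const _)]
  · simp
  · filter_upwards [hμ] with y hy using
      cutoffHopfLax_apply x f ε hδ ht (hM y (mem_closedBall_zero_iff.2 hy))

lemma IsUniformPath.integral_softHopfLax_sub_le {ρ : E → ℝ → ℝ} {v : E → ℝ → E} {μ ν : Measure E}
    [IsProbabilityMeasure μ] [IsProbabilityMeasure ν] (h : IsUniformPath 0 1 ρ v μ ν)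
    (hμ : ∀ᵐ y ∂μ, ‖y‖ ≤ R) (hν : ∀ᵐ y ∂ν, ‖y‖ ≤ R) (hε : 0 < ε) (hδ : 0 < δ) :
    ∫ y, softHopfLax x f ε y (1 + δ) ∂ν - ∫ y, softHopfLax x f ε y (0 + δ) ∂μ ≤
      (action 0 1 ρ v).toReal / 2 := by
  have hbdd (b : ℝ) := (isCompact_closedBall (0 : E) R).bddAbove_image
    (continuous_softHopfLax x f ε b).continuousOn
  obtain ⟨M₀, hM₀⟩ := hbdd (0 + δ)
  obtain ⟨M₁, hM₁⟩ := hbdd (1 + δ)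
  have hgap := h.integral_sub_integral_le (contDiff_cutoffHopfLax x f hδ (max M₀ M₁))
    (hasCompactSupport_cutoffHopfLax x f hε hδ _)
    fun t ht y w => fderiv_cutoffHopfLax_le x f hε hδ _ ht y w
  rw [integral_cutoffHopfLax x f hμ hδ (left_mem_Icc.2 zero_le_one)
      fun y hy => (hM₀ (mem_image_of_mem _ hy)).trans (le_max_left _ _),
    integral_cutoffHopfLax x f hν hδ (right_mem_Icc.2 zero_le_one)
      fun y hy => (hM₁ (mem_image_of_mem _ hy)).trans (le_max_right _ _)] at hgap
  linarith

end LowerBound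

/-! ### Cell decompositions -/

section GridCell

variable {ι : Type*}

/-- The half-open cube of side `r` with integer coordinates `k` in the grid `r ℤ^ι`. -/
def gridCell (r : ℝ) (k : ι → ℤ) : Set (EuclideanSpace ℝ ι) := {y | ∀ i, ⌊y i / r⌋ = k i}

lemma mem_gridCell_floor (r : ℝ) (y : EuclideanSpace ℝ ι) :
    y ∈ gridCell r fun i => ⌊y i / r⌋ := fun _ => rfl

lemma disjoint_gridCell (r : ℝ) {k l : ι → ℤ} (h : k ≠ l) :
    Disjoint (gridCell r k) (gridCell r l) :=
  Set.disjoint_left.2 fun _ hk hl => h (funext fun i => (hk i).symm.trans (hl i))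

lemma convex_gridCell (r : ℝ) (k : ι → ℤ) : Convex ℝ (gridCell r k) := by
  have hcell : gridCell r k = ⋂ i, (fun y : EuclideanSpace ℝ ι => y i / r) ⁻¹'
      Ico (k i : ℝ) (k i + 1) := by
    ext y
    simp only [gridCell, mem_ofPred_eq, mem_iInter, mem_preimage, mem_Ico, Int.floor_eq_iff]
  rw [hcell]
  exact convex_iInter fun i => (convex_Ico _ _).is_linear_preimage
    ⟨fun a b => by simp [add_div], fun a b => by simp [mul_div_assoc]⟩

lemma measurableSet_gridCell [Countable ι] (r : ℝ) (k : ι → ℤ) : MeasurableSet (gridCell r k) := by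
  simp only [gridCell, ofPred_forall]
  refine MeasurableSet.iInter fun i => ?_
  have h : Measurable fun y : EuclideanSpace ℝ ι => ⌊y i / r⌋ := by fun_prop
  exact h (measurableSet_singleton _)

lemma norm_sub_le_of_mem_gridCell [Fintype ι] {r : ℝ} (hr : 0 < r) {k : ι → ℤ}
    {y z : EuclideanSpace ℝ ι} (hy : y ∈ gridCell r k) (hz : z ∈ gridCell r k) :
    ‖y - z‖ ≤ (Fintype.card ι + 1) * r := by
  have hcoord (i : ι) : ‖(y - z) i‖ ≤ r := by
    have h := Int.abs_sub_lt_one_of_floor_eq_floor ((hy i).trans (hz i).symm)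
    rw [← sub_div, abs_div, abs_of_pos hr, div_lt_one hr] at h
    simpa using h.le
  rw [EuclideanSpace.norm_eq]
  refine Real.sqrt_le_iff.2 ⟨by positivity, ?_⟩
  calc ∑ i, ‖(y - z) i‖ ^ 2 ≤ ∑ _i : ι, r ^ 2 := by gcongr with i; exact hcoord i
    _ = Fintype.card ι * r ^ 2 := by simp
    _ ≤ ((Fintype.card ι + 1) * r) ^ 2 := by
      nlinarith [sq_nonneg r, mul_nonneg (Nat.cast_nonneg (α := ℝ) (Fintype.card ι)) (sq_nonneg r),
        mul_nonneg (sq_nonneg (Fintype.card ι : ℝ)) (sq_nonneg r)]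

lemma finite_setOf_inter_gridCell_nonempty [Finite ι] {r : ℝ} (hr : 0 < r)
    {Ω : Set (EuclideanSpace ℝ ι)} (hΩ : Bornology.IsBounded Ω) :
    {k | (Ω ∩ gridCell r k).Nonempty}.Finite := by
  have := Fintype.ofFinite ι
  obtain ⟨R, hR⟩ := hΩ.exists_norm_le
  refine (Finite.pi' fun _ : ι => finite_Icc ⌊-R / r⌋ ⌊R / r⌋).subset ?_
  rintro k ⟨y, hyΩ, hyk⟩ i
  have hy := abs_le.1 ((PiLp.norm_apply_le y i).trans (hR y hyΩ))
  rw [← hyk i]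
  exact ⟨Int.floor_le_floor (by gcongr; exact hy.1), Int.floor_le_floor (by gcongr; exact hy.2)⟩

end GridCell

/-- A partition of `Ω` into measurable cells with disjoint convex hulls, each with a marked point
at distance at most `η` from all points of the cell. -/
structure CellDecomposition {E : Type*} [NormedAddCommGroup E] [NormedSpace ℝ E]
    [MeasurableSpace E] (Ω : Set E) (η : ℝ) (ι : Type*) where
  cell : ι → Set E
  center : ι → E
  measurableSet_cell : ∀ k, MeasurableSet (cell k)
  iUnion_cell : ⋃ k, cell k = Ω
  disjoint_convexHull : Pairwise fun k l => Disjoint (convexHull ℝ (cell k)) (convexHull ℝ (cell l))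
  center_mem_cell : ∀ k, center k ∈ cell k
  norm_sub_center_le : ∀ k, ∀ y ∈ cell k, ‖y - center k‖ ≤ η

lemma exists_cellDecomposition {ι : Type*} [Fintype ι] {Ω : Set (EuclideanSpace ℝ ι)}
    (hΩ : MeasurableSet Ω) (hbdd : Bornology.IsBounded Ω) {η : ℝ} (hη : 0 < η) :
    ∃ s : Finset (ι → ℤ), Nonempty (CellDecomposition Ω η s) := by
  set r : ℝ := η / (Fintype.card ι + 1) with hr_def
  have hr : 0 < r := by positivity
  have hfin := finite_setOf_inter_gridCell_nonempty hr hbdd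
  have hne (k : hfin.toFinset) : (Ω ∩ gridCell r k.1).Nonempty := hfin.mem_toFinset.1 k.2
  choose x hx using hne
  refine ⟨hfin.toFinset, ⟨⟨fun k => Ω ∩ gridCell r k.1, x, ?_, ?_, ?_, hx, ?_⟩⟩⟩
  · exact fun k => hΩ.inter (measurableSet_gridCell r k.1)
  · refine Subset.antisymm (iUnion_subset fun k => inter_subset_left) fun y hy => ?_
    have hmem : y ∈ Ω ∩ gridCell r _ := ⟨hy, mem_gridCell_floor r y⟩
    exact mem_iUnion.2 ⟨⟨_, hfin.mem_toFinset.2 ⟨y, hmem⟩⟩, hmem⟩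
  · have hsubset (k : hfin.toFinset) : convexHull ℝ (Ω ∩ gridCell r k.1) ⊆ gridCell r k.1 :=
      convexHull_min inter_subset_right (convex_gridCell r k.1)
    exact fun k l hkl => (disjoint_gridCell r (Subtype.coe_ne_coe.2 hkl)).mono
      (hsubset k) (hsubset l)
  · intro k y hy
    refine (norm_sub_le_of_mem_gridCell hr hy.2 (hx k).2).trans_eq ?_
    rw [hr_def]
    field_simp

namespace CellDecomposition

variable {E ι : Type*} [NormedAddCommGroup E] [NormedSpace ℝ E] [MeasurableSpace E] {Ω : Set E}
  {η : ℝ}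

lemma cell_subset (S : CellDecomposition Ω η ι) (k : ι) : S.cell k ⊆ Ω :=
  (subset_iUnion S.cell k).trans_eq S.iUnion_cell

lemma center_mem (S : CellDecomposition Ω η ι) (k : ι) : S.center k ∈ Ω :=
  S.cell_subset k (S.center_mem_cell k)

lemma center_mem_convexHull (S : CellDecomposition Ω η ι) (k : ι) :
    S.center k ∈ convexHull ℝ (S.cell k) :=
  subset_convexHull ℝ _ (S.center_mem_cell k)

lemma center_injective (S : CellDecomposition Ω η ι) : Function.Injective S.center := by
  refine fun k l h => by_contra fun hkl => ?_
  exact Set.disjoint_left.1 (S.disjoint_convexHull hkl) (S.center_mem_convexHull k)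
    (h ▸ S.center_mem_convexHull l)

lemma disjoint_cell (S : CellDecomposition Ω η ι) :
    Pairwise fun k l => Disjoint (S.cell k) (S.cell l) :=
  fun _ _ hkl =>
    (S.disjoint_convexHull hkl).mono (subset_convexHull ℝ _) (subset_convexHull ℝ _)

lemma sum_restrict [Fintype ι] (S : CellDecomposition Ω η ι) (μ : Measure E) :
    ∑ k, μ.restrict (S.cell k) = μ.restrict Ω := by
  rw [← Measure.sum_fintype, ← Measure.restrict_iUnion S.disjoint_cell S.measurableSet_cell,
    S.iUnion_cell]

lemma sum_measure [Fintype ι] (S : CellDecomposition Ω η ι) (μ : Measure E) :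
    ∑ k, μ (S.cell k) = μ Ω := by
  simpa using congr_arg (· univ) (S.sum_restrict μ)

lemma isAEPartition (S : CellDecomposition Ω η ι) {μ : Measure E} (hμ : ∀ᵐ x ∂μ, x ∈ Ω) :
    IsAEPartition μ S.cell where
  measurableSet := S.measurableSet_cell
  disjoint := S.disjoint_cell
  ae_mem := by
    filter_upwards [hμ] with x hx
    exact mem_iUnion.1 (S.iUnion_cell.symm ▸ hx)

lemma nonempty (S : CellDecomposition Ω η ι) (hΩ : Ω.Nonempty) : Nonempty ι :=
  have ⟨_, hx⟩ := hΩ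
  have ⟨k, _⟩ := mem_iUnion.1 (S.iUnion_cell.symm ▸ hx)
  ⟨k⟩

end CellDecomposition

/-! ### The lower bound -/

section Discretisation

variable {E ι : Type*} [NormedAddCommGroup E] {a b x y : E} {D η : ℝ}

lemma exists_norm_sub_le_of_isBounded {s t : Set E} (hs : Bornology.IsBounded s)
    (ht : Bornology.IsBounded t) : ∃ D ≥ 0, ∀ a ∈ s, ∀ b ∈ t, ‖a - b‖ ≤ D := by
  refine ⟨Metric.diam (s ∪ t), Metric.diam_nonneg, fun a ha b hb => ?_⟩
  rw [← dist_eq_norm]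
  exact Metric.dist_le_diam_of_mem (hs.union ht) (.inl ha) (.inr hb)

lemma norm_sub_sq_le_add (hab : ‖a - b‖ ≤ D) (hxy : ‖x - y‖ ≤ D) (hax : ‖a - x‖ ≤ η)
    (hby : ‖b - y‖ ≤ η) : ‖a - b‖ ^ 2 ≤ ‖x - y‖ ^ 2 + 4 * D * η := by
  have htri : ‖a - b‖ ≤ ‖x - y‖ + 2 * η := by
    have h := norm_add_le (x - y) ((a - x) - (b - y))
    rw [show x - y + (a - x - (b - y)) = a - b by abel] at h
    linarith [norm_sub_le (a - x) (b - y)]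
  have hη : 0 ≤ η := (norm_nonneg _).trans hax
  nlinarith [norm_nonneg (a - b), norm_nonneg (x - y)]

variable [Fintype ι] (x : ι → E) (f : ι → ℝ) {ε : ℝ}

lemma softHopfLax_le_of_norm_sub_le (hε : 0 < ε) {k : ι} (hη : 0 < η) (ha : ‖a - x k‖ ≤ η) :
    softHopfLax x f ε a η ≤ f k + η / 2 := by
  refine (softMin_le hε _ k).trans ?_
  have hdiv : ‖a - x k‖ ^ 2 / (2 * η) ≤ η / 2 := by
    rw [div_le_iff₀ (by positivity)]
    nlinarith [norm_nonneg (a - x k)]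
  linarith

lemma le_softHopfLax_one_add [Nonempty ι] (hε : 0 < ε) (hη : 0 < η) (hη1 : η ≤ 1)
    (hD : ∀ k, ‖b - x k‖ ≤ D) (hb : ‖b - y‖ ≤ η) {g : ℝ}
    (hg : ∀ k, g ≤ f k + ‖x k - y‖ ^ 2 / 2) :
    g - (D ^ 2 / 2 + D + 1 / 2) * η - ε * Real.log (Fintype.card ι) ≤
      softHopfLax x f ε b (1 + η) := by
  refine le_softMin hε fun k => ?_
  have htri : ‖x k - y‖ ≤ ‖b - x k‖ + η := by
    rw [norm_sub_rev b]
    exact (norm_sub_le_norm_sub_add_norm_sub _ b _).trans (by gcongr)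
  have hsq : ‖x k - y‖ ^ 2 ≤ (‖b - x k‖ + η) ^ 2 := by gcongr
  have hdiv : ‖b - x k‖ ^ 2 / 2 - ‖b - x k‖ ^ 2 * η / 2 ≤ ‖b - x k‖ ^ 2 / (2 * (1 + η)) := by
    rw [le_div_iff₀ (by positivity)]
    nlinarith [mul_nonneg (sq_nonneg ‖b - x k‖) (sq_nonneg η)]
  have hDsq : ‖b - x k‖ ^ 2 * η ≤ D ^ 2 * η := by gcongr; exact hD k
  have hDη : ‖b - x k‖ * η ≤ D * η := by gcongr; exact hD k
  nlinarith [hg k]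

end Discretisation

lemma IsUniformPath.sum_sub_sum_le {E ι κ : Type*} [NormedAddCommGroup E] [InnerProductSpace ℝ E]
    [FiniteDimensional ℝ E] [MeasurableSpace E] [BorelSpace E] [Fintype ι] [Nonempty ι] [Fintype κ]
    {ρ : E → ℝ → ℝ} {v : E → ℝ → E} {μ ν : Measure E} [IsProbabilityMeasure μ]
    [IsProbabilityMeasure ν] (h : IsUniformPath 0 1 ρ v μ ν) {Ω₀ Ω₁ : Set E}
    (hμ : ∀ᵐ x ∂μ, x ∈ Ω₀) (hν : ∀ᵐ x ∂ν, x ∈ Ω₁) (h₀ : Bornology.IsBounded Ω₀)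
    (h₁ : Bornology.IsBounded Ω₁) {D η : ℝ} (hD : ∀ a ∈ Ω₀, ∀ b ∈ Ω₁, ‖a - b‖ ≤ D) (hη : 0 < η)
    (hη1 : η ≤ 1) (S₀ : CellDecomposition Ω₀ η ι) (S₁ : CellDecomposition Ω₁ η κ) {f : ι → ℝ}
    {g : κ → ℝ} (hfg : ∀ k l, g l ≤ f k + ‖S₀.center k - S₁.center l‖ ^ 2 / 2) :
    ∑ l, ν.real (S₁.cell l) * g l - ∑ k, μ.real (S₀.cell k) * f k ≤
      (action 0 1 ρ v).toReal / 2 + (D ^ 2 / 2 + D + 2) * η := by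
  obtain ⟨ε, hε, hεη⟩ := exists_pos_mul_lt hη (Real.log (Fintype.card ι))
  obtain ⟨R, hR⟩ := (h₀.union h₁).exists_norm_le
  have hμR : ∀ᵐ x ∂μ, ‖x‖ ≤ R := hμ.mono fun x hx => hR x (.inl hx)
  have hνR : ∀ᵐ x ∂ν, ‖x‖ ≤ R := hν.mono fun x hx => hR x (.inr hx)
  have hQ₀ := S₀.isAEPartition hμ
  have hQ₁ := S₁.isAEPartition hν
  have hgap := h.integral_softHopfLax_sub_le S₀.center f hμR hνR hε hη
  have hinitial : ∫ y, softHopfLax S₀.center f ε y (0 + η) ∂μ ≤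
      ∑ k, μ.real (S₀.cell k) * (f k + η / 2) := by
    rw [zero_add]
    refine hQ₀.integral_le_sum_mul (integrable_of_ae_norm_le hμR (continuous_softHopfLax ..)) ?_
    exact fun k a ha => softHopfLax_le_of_norm_sub_le _ f hε hη (S₀.norm_sub_center_le k a ha)
  have hfinal : ∑ l, ν.real (S₁.cell l) * (g l - (D ^ 2 / 2 + D + 1 / 2) * η - η) ≤
      ∫ y, softHopfLax S₀.center f ε y (1 + η) ∂ν := by
    refine hQ₁.sum_mul_le_integral (integrable_of_ae_norm_le hνR (continuous_softHopfLax ..)) ?_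
    intro l b hb
    refine le_trans ?_ (le_softHopfLax_one_add S₀.center f hε hη hη1 (D := D) (fun k => ?_)
      (S₁.norm_sub_center_le l b hb) fun k => hfg k l)
    · linarith
    · rw [norm_sub_rev]
      exact hD _ (S₀.center_mem k) _ (S₁.cell_subset l hb)
  simp only [mul_add, mul_sub, Finset.sum_add_distrib, Finset.sum_sub_distrib, ← Finset.sum_mul,
    hQ₀.measureReal_mem_stdSimplex.2, hQ₁.measureReal_mem_stdSimplex.2] at hinitial hfinal
  linarith

lemma le_of_forall_le_add_ofReal_mul {a b : ℝ≥0∞} {B η₀ : ℝ} (hη₀ : 0 < η₀)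
    (h : ∀ η, 0 < η → η ≤ η₀ → a ≤ b + ENNReal.ofReal (B * η)) : a ≤ b := by
  refine ENNReal.le_of_forall_pos_le_add fun ε hε _ => ?_
  obtain ⟨η, hη, hηε⟩ := exists_pos_mul_lt (NNReal.coe_pos.2 hε) |B|
  refine (h (min η η₀) (lt_min hη hη₀) (min_le_right _ _)).trans ?_
  gcongr
  rw [← ENNReal.ofReal_coe_nnreal]
  refine ENNReal.ofReal_le_ofReal ?_
  calc B * min η η₀ ≤ |B| * η := by
        gcongr
        exacts [le_abs_self B, min_le_left _ _]
    _ ≤ ε := hηε.le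

section Wasserstein

variable {d : ℕ} {μ ν : Measure (EuclideanSpace ℝ (Fin d))} [IsProbabilityMeasure μ]
  [IsProbabilityMeasure ν] {Ω₀ Ω₁ : Set (EuclideanSpace ℝ (Fin d))}

lemma W2sq_le_of_isTransportPlan (hμ : ∀ᵐ x ∂μ, x ∈ Ω₀) (hν : ∀ᵐ x ∂ν, x ∈ Ω₁) {D η : ℝ}
    (hD : ∀ a ∈ Ω₀, ∀ b ∈ Ω₁, ‖a - b‖ ≤ D) {ι κ : Type*} [Fintype ι] [Fintype κ]
    (S₀ : CellDecomposition Ω₀ η ι) (S₁ : CellDecomposition Ω₁ η κ) {p : ι × κ → ℝ}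
    (hp : IsTransportPlan (fun k => μ.real (S₀.cell k)) (fun l => ν.real (S₁.cell l)) p) :
    W2sq μ ν ≤ ENNReal.ofReal
      (∑ a, p a * ‖S₀.center a.1 - S₁.center a.2‖ ^ 2 + 4 * D * η) := by
  have hQ₀ := S₀.isAEPartition hμ
  have hQ₁ := S₁.isAEPartition hν
  have hle : W2sq μ ν ≤ ∫⁻ z, ENNReal.ofReal (‖z.1 - z.2‖ ^ 2)
      ∂planCoupling μ ν S₀.cell S₁.cell p :=
    sInf_le ⟨_, hp.map_fst_planCoupling hQ₀, hp.map_snd_planCoupling hQ₁, rfl⟩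
  have hcost (a : ι × κ) : 0 ≤ ‖S₀.center a.1 - S₁.center a.2‖ ^ 2 + 4 * D * η := by
    have hx := S₀.center_mem_cell a.1
    have hy := S₁.center_mem_cell a.2
    have hD' := hD _ (S₀.cell_subset _ hx) _ (S₁.cell_subset _ hy)
    have h := norm_sub_sq_le_add hD' hD' (S₀.norm_sub_center_le _ _ hx)
      (S₁.norm_sub_center_le _ _ hy)
    exact (sq_nonneg _).trans h
  calc W2sq μ ν
      ≤ ∑ a, ENNReal.ofReal (p a) *
          ENNReal.ofReal (‖S₀.center a.1 - S₁.center a.2‖ ^ 2 + 4 * D * η) :=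
        hle.trans <| lintegral_planCoupling_le S₀.measurableSet_cell S₁.measurableSet_cell p
          fun a x hx y hy => ENNReal.ofReal_le_ofReal <| norm_sub_sq_le_add
            (hD _ (S₀.cell_subset _ hx) _ (S₁.cell_subset _ hy))
            (hD _ (S₀.center_mem _) _ (S₁.center_mem _)) (S₀.norm_sub_center_le _ _ hx)
            (S₁.norm_sub_center_le _ _ hy)
    _ = ENNReal.ofReal (∑ a, p a * (‖S₀.center a.1 - S₁.center a.2‖ ^ 2 + 4 * D * η)) := by
        simp only [← ENNReal.ofReal_mul (hp.nonneg _)]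
        rw [← ENNReal.ofReal_sum_of_nonneg fun a _ => mul_nonneg (hp.nonneg a) (hcost a)]
    _ = _ := by
        simp only [mul_add, Finset.sum_add_distrib, ← Finset.sum_mul,
          (hp.mem_stdSimplex hQ₀.measureReal_mem_stdSimplex).2, one_mul]

theorem IsUniformPath.W2sq_le_action {ρ : EuclideanSpace ℝ (Fin d) → ℝ → ℝ}
    {v : EuclideanSpace ℝ (Fin d) → ℝ → EuclideanSpace ℝ (Fin d)}
    (h : IsUniformPath 0 1 ρ v μ ν) (hΩ₀ : MeasurableSet Ω₀) (hΩ₁ : MeasurableSet Ω₁)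
    (hb₀ : Bornology.IsBounded Ω₀) (hb₁ : Bornology.IsBounded Ω₁)
    (hμ : ∀ᵐ x ∂μ, x ∈ Ω₀) (hν : ∀ᵐ x ∂ν, x ∈ Ω₁) : W2sq μ ν ≤ action 0 1 ρ v := by
  obtain ⟨D, -, hD⟩ := exists_norm_sub_le_of_isBounded hb₀ hb₁
  refine le_of_forall_le_add_ofReal_mul (B := D ^ 2 + 6 * D + 4) one_pos fun η hη hη1 => ?_
  obtain ⟨s, ⟨S₀⟩⟩ := exists_cellDecomposition hΩ₀ hb₀ hη
  obtain ⟨t, ⟨S₁⟩⟩ := exists_cellDecomposition hΩ₁ hb₁ hη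
  have hm := (S₀.isAEPartition hμ).measureReal_mem_stdSimplex
  have hn := (S₁.isAEPartition hν).measureReal_mem_stdSimplex
  have : Nonempty s := S₀.nonempty hμ.exists
  obtain ⟨p, hp, hcost⟩ := exists_isTransportPlan_sum_le_of_forall_dual_le hm hn
    (fun a => ‖S₀.center a.1 - S₁.center a.2‖ ^ 2 / 2) _
    fun f g hfg => h.sum_sub_sum_le hμ hν hb₀ hb₁ hD hη hη1 S₀ S₁ hfg
  refine (W2sq_le_of_isTransportPlan hμ hν hD S₀ S₁ hp).trans ?_
  rw [← ENNReal.ofReal_toReal h.action_lt_top.ne]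
  refine (ENNReal.ofReal_le_ofReal ?_).trans ENNReal.ofReal_add_le
  simp only [← mul_div_assoc, ← Finset.sum_div] at hcost
  linarith

end Wasserstein

/-! ### Concatenation of paths -/

section Transportable

variable {E : Type*} [NormedAddCommGroup E] [InnerProductSpace ℝ E] [FiniteDimensional ℝ E]
  [MeasurableSpace E] [BorelSpace E] {α β γ : ℝ} {μ ν τ : Measure E} {C D : ℝ≥0∞}

/-- Some path of uniform densities on `[α, β]` joins `μ` to `ν` with action at most `C`. -/
def Transportable (α β : ℝ) (μ ν : Measure E) (C : ℝ≥0∞) : Prop :=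
  ∃ ρ v, IsUniformPath α β ρ v μ ν ∧ action α β ρ v ≤ C

lemma Transportable.mono (h : Transportable α β μ ν C) (hCD : C ≤ D) : Transportable α β μ ν D :=
  have ⟨ρ, v, hpath, haction⟩ := h
  ⟨ρ, v, hpath, haction.trans hCD⟩

lemma restrict_Icc_add_restrict_Icc (hαβ : α ≤ β) (hβγ : β ≤ γ) :
    (volume : Measure ℝ).restrict (Icc α β) + volume.restrict (Icc β γ) =
      volume.restrict (Icc α γ) := by
  rw [← restrict_Ioc_eq_restrict_Icc (a := β), ← Measure.restrict_union _ measurableSet_Ioc,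
    Icc_union_Ioc_eq_Icc hαβ hβγ]
  exact Set.disjoint_left.2 fun t ht ht' => ht'.1.not_ge ht.2

section Congr

variable {ρ ρ' : E → ℝ → ℝ} {v v' : E → ℝ → E}

lemma action_congr (hρ : ∀ᵐ t ∂volume.restrict (Icc α β), ∀ x, ρ x t = ρ' x t)
    (hv : ∀ᵐ t ∂volume.restrict (Icc α β), ∀ x, v x t = v' x t) :
    action α β ρ v = action α β ρ' v' := by
  refine lintegral_congr_ae ?_
  filter_upwards [Measure.quasiMeasurePreserving_snd.ae hρ,
    Measure.quasiMeasurePreserving_snd.ae hv] with z hρz hvz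
  rw [hρz, hvz]

lemma IsUniformPath.congr (h : IsUniformPath α β ρ v μ ν)
    (hρ' : Measurable fun z : E × ℝ => ρ' z.1 z.2) (hv' : Measurable fun z : E × ℝ => v' z.1 z.2)
    (hnonneg : ∀ x t, 0 ≤ ρ' x t)
    (hρ : ∀ᵐ t ∂volume.restrict (Icc α β), ∀ x, ρ x t = ρ' x t)
    (hv : ∀ᵐ t ∂volume.restrict (Icc α β), ∀ x, v x t = v' x t) :
    IsUniformPath α β ρ' v' μ ν where
  measurable_density := hρ'
  measurable_velocity := hv'
  density_nonneg := hnonneg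
  isUniformDensity := by
    filter_upwards [h.isUniformDensity, hρ] with t ht hρt
    simpa only [hρt] using ht
  action_lt_top := action_congr hρ hv ▸ h.action_lt_top
  isWeakSolution q hq hqc := by
    rw [← h.isWeakSolution q hq hqc]
    refine integral_congr_ae ?_
    filter_upwards [hρ, hv] with t hρt hvt
    simp only [hρt, hvt]

lemma action_add_action (hαβ : α ≤ β) (hβγ : β ≤ γ) :
    action α β ρ v + action β γ ρ v = action α γ ρ v := by
  simp only [action]
  rw [← lintegral_add_measure, ← Measure.prod_add, restrict_Icc_add_restrict_Icc hαβ hβγ]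

lemma IsUniformPath.append (hαβ : α ≤ β) (hβγ : β ≤ γ) (h₁ : IsUniformPath α β ρ v μ ν)
    (h₂ : IsUniformPath β γ ρ v ν τ) : IsUniformPath α γ ρ v μ τ where
  measurable_density := h₁.measurable_density
  measurable_velocity := h₁.measurable_velocity
  density_nonneg := h₁.density_nonneg
  isUniformDensity := by
    rw [← restrict_Icc_add_restrict_Icc hαβ hβγ, ae_add_measure_iff]
    exact ⟨h₁.isUniformDensity, h₂.isUniformDensity⟩
  action_lt_top := by
    rw [← action_add_action hαβ hβγ]
    exact ENNReal.add_lt_top.2 ⟨h₁.action_lt_top, h₂.action_lt_top⟩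
  isWeakSolution q hq hqc := by
    rw [← restrict_Icc_add_restrict_Icc hαβ hβγ,
      integral_add_measure (h₁.integrable_mul_fderiv hq hqc).integral_prod_right
        (h₂.integrable_mul_fderiv hq hqc).integral_prod_right,
      h₁.isWeakSolution q hq hqc, h₂.isWeakSolution q hq hqc]
    ring

end Congr

theorem Transportable.trans (hαβ : α ≤ β) (hβγ : β ≤ γ) (h₁ : Transportable α β μ ν C)
    (h₂ : Transportable β γ ν τ D) : Transportable α γ μ τ (C + D) := by
  obtain ⟨ρ₁, v₁, hpath₁, haction₁⟩ := h₁
  obtain ⟨ρ₂, v₂, hpath₂, haction₂⟩ := h₂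
  have hlt : ∀ᵐ t ∂volume.restrict (Icc α β), t < β := by
    rw [← restrict_Ico_eq_restrict_Icc]
    exact (ae_restrict_mem measurableSet_Ico).mono fun t ht => ht.2
  have hge : ∀ᵐ t ∂volume.restrict (Icc β γ), ¬ t < β :=
    (ae_restrict_mem measurableSet_Icc).mono fun t ht => ht.1.not_gt
  have hmeas : MeasurableSet {z : E × ℝ | z.2 < β} := measurable_snd measurableSet_Iio
  let ρ (x : E) (t : ℝ) : ℝ := if t < β then ρ₁ x t else ρ₂ x t
  let v (x : E) (t : ℝ) : E := if t < β then v₁ x t else v₂ x t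
  have hρ : Measurable fun z : E × ℝ => ρ z.1 z.2 :=
    .ite hmeas hpath₁.measurable_density hpath₂.measurable_density
  have hv : Measurable fun z : E × ℝ => v z.1 z.2 :=
    .ite hmeas hpath₁.measurable_velocity hpath₂.measurable_velocity
  have hnonneg (x : E) (t : ℝ) : 0 ≤ ρ x t :=
    ite_nonneg (hpath₁.density_nonneg x t) (hpath₂.density_nonneg x t)
  have hρ₁ : ∀ᵐ t ∂volume.restrict (Icc α β), ∀ x, ρ₁ x t = ρ x t :=
    hlt.mono fun t ht x => (if_pos ht).symm
  have hv₁ : ∀ᵐ t ∂volume.restrict (Icc α β), ∀ x, v₁ x t = v x t :=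
    hlt.mono fun t ht x => (if_pos ht).symm
  have hρ₂ : ∀ᵐ t ∂volume.restrict (Icc β γ), ∀ x, ρ₂ x t = ρ x t :=
    hge.mono fun t ht x => (if_neg ht).symm
  have hv₂ : ∀ᵐ t ∂volume.restrict (Icc β γ), ∀ x, v₂ x t = v x t :=
    hge.mono fun t ht x => (if_neg ht).symm
  refine ⟨ρ, v, (hpath₁.congr hρ hv hnonneg hρ₁ hv₁).append hαβ hβγ
    (hpath₂.congr hρ hv hnonneg hρ₂ hv₂), ?_⟩
  rw [← action_add_action hαβ hβγ, ← action_congr hρ₁ hv₁, ← action_congr hρ₂ hv₂]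
  exact add_le_add haction₁ haction₂

end Transportable

/-! ### Rigidly scaled pieces -/

section AlongFlow

variable {E : Type*} [NormedAddCommGroup E] [InnerProductSpace ℝ E] [FiniteDimensional ℝ E]
  [MeasurableSpace E] [BorelSpace E]

lemma map_restrict_add_smul {s : ℝ} (hs : s ≠ 0) (a : E) (A : Set E) :
    ENNReal.ofReal |(s ^ Module.finrank ℝ E)⁻¹| •
        (volume : Measure E).restrict ((fun x => s⁻¹ • (x - a)) ⁻¹' A) =
      (volume.restrict A).map fun y => a + s • y := by
  have hmap : (volume : Measure E).map (fun y => a + s • y) =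
      ENNReal.ofReal |(s ^ Module.finrank ℝ E)⁻¹| • volume := by
    rw [← Function.comp_def (a + ·) (s • ·),
      ← Measure.map_map (measurable_const_add a) (measurable_const_smul s),
      Measure.map_addHaar_smul volume hs, Measure.map_smul,
      (measurePreserving_add_left volume a).map_eq]
  have hemb : MeasurableEmbedding fun y : E => a + s • y :=
    (Homeomorph.smulOfNeZero s hs |>.trans (Homeomorph.addLeft a)).measurableEmbedding
  have hpre : (fun y : E => a + s • y) ⁻¹' ((fun x => s⁻¹ • (x - a)) ⁻¹' A) = A := by
    ext y
    simp [hs]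
  rw [← Measure.restrict_smul, ← hmap, hemb.restrict_map, hpre]

lemma integrableOn_of_continuous_of_isBounded {F : Type*} [NormedAddCommGroup F] {f : E → F}
    {A : Set E} (hf : Continuous f) (hA : Bornology.IsBounded A) : IntegrableOn f A :=
  (hf.continuousOn.integrableOn_compact hA.isCompact_closure).mono_set subset_closure

variable {α β : ℝ} {A : Set E} {Φ Φ' : ℝ × E → E} {q : E × ℝ → ℝ}

lemma integrable_fderiv_along_flow (hA : Bornology.IsBounded A) (hΦ : Continuous Φ)
    (hΦ' : Continuous Φ') (hq : ContDiff ℝ 1 q) :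
    Integrable (fun z : ℝ × E => fderiv ℝ q (Φ z, z.1) (Φ' z, 1))
      ((volume.restrict (Icc α β)).prod (volume.restrict A)) := by
  have hcont : Continuous fun z : ℝ × E => fderiv ℝ q (Φ z, z.1) (Φ' z, 1) :=
    ((hq.continuous_fderiv one_ne_zero).comp (hΦ.prodMk continuous_fst)).clm_apply
      (hΦ'.prodMk continuous_const)
  rw [Measure.prod_restrict]
  exact (hcont.continuousOn.integrableOn_compact (isCompact_Icc.prod hA.isCompact_closure)).mono_set
    (prod_mono_right subset_closure)

lemma integral_fderiv_along_flow (hαβ : α ≤ β) (hA : Bornology.IsBounded A) (hΦ : Continuous Φ)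
    (hΦ' : Continuous Φ') (hderiv : ∀ t y, HasDerivAt (fun s => Φ (s, y)) (Φ' (t, y)) t)
    (hq : ContDiff ℝ 1 q) :
    ∫ t in Icc α β, ∫ y in A, fderiv ℝ q (Φ (t, y), t) (Φ' (t, y), 1) =
      (∫ y in A, q (Φ (β, y), β)) - ∫ y in A, q (Φ (α, y), α) := by
  have hslice (t : ℝ) : IntegrableOn (fun y => q (Φ (t, y), t)) A :=
    integrableOn_of_continuous_of_isBounded (hq.continuous.comp
      ((hΦ.comp (.prodMk_right t)).prodMk continuous_const)) hA
  rw [integral_integral_swap (integrable_fderiv_along_flow hA hΦ hΦ' hq),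
    ← integral_sub (hslice β) (hslice α)]
  refine integral_congr_ae (.of_forall fun y => ?_)
  have hpath (t : ℝ) : HasDerivAt (fun s => q (Φ (s, y), s))
      (fderiv ℝ q (Φ (t, y), t) (Φ' (t, y), 1)) t :=
    (hq.differentiable one_ne_zero _).hasFDerivAt.comp_hasDerivAt t
      ((hderiv t y).prodMk (hasDerivAt_id t))
  have hcont : Continuous fun t => fderiv ℝ q (Φ (t, y), t) (Φ' (t, y), 1) :=
    ((hq.continuous_fderiv one_ne_zero).comp
      ((hΦ.comp (.prodMk_left y)).prodMk continuous_id)).clm_apply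
      ((hΦ'.comp (.prodMk_left y)).prodMk continuous_const)
  simp only
  rw [integral_Icc_eq_integral_Ioc, ← intervalIntegral.integral_of_le hαβ]
  exact intervalIntegral.integral_eq_sub_of_hasDerivAt (fun t _ => hpath t)
    (hcont.intervalIntegrable _ _)

end AlongFlow

section PieceMotion

variable {E ι : Type*} [NormedAddCommGroup E] [InnerProductSpace ℝ E] [FiniteDimensional ℝ E]
  [MeasurableSpace E] [BorelSpace E] [Fintype ι] {α β : ℝ}

/-- Finitely many bounded sets moved by the similarities `y ↦ shift i t + scale t • y`, with a
common scale, so that the moved sets are disjoint at all times in the open interval `(α, β)`. The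
scale may vanish and the sets may overlap at the endpoints. -/
structure PieceMotion (E ι : Type*) [NormedAddCommGroup E] [InnerProductSpace ℝ E]
    [FiniteDimensional ℝ E] [MeasurableSpace E] [BorelSpace E] [Fintype ι] (α β : ℝ) where
  piece : ι → Set E
  shift : ι → ℝ → E
  scale : ℝ → ℝ
  measurableSet_piece : ∀ i, MeasurableSet (piece i)
  isBounded_piece : ∀ i, Bornology.IsBounded (piece i)
  sum_volume_ne_zero : ∑ i, volume (piece i) ≠ 0
  contDiff_shift : ∀ i, ContDiff ℝ 1 (shift i)
  contDiff_scale : ContDiff ℝ 1 scale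
  scale_pos : ∀ t ∈ Ioo α β, 0 < scale t
  eq_of_add_smul_eq : ∀ t ∈ Ioo α β, ∀ i, ∀ y ∈ piece i, ∀ j, ∀ z ∈ piece j,
    shift i t + scale t • y = shift j t + scale t • z → i = j

namespace PieceMotion

variable (M : PieceMotion E ι α β) (i : ι) {t : ℝ}

/-- The motion of the `i`-th piece. -/
def flow (t : ℝ) (y : E) : E := M.shift i t + M.scale t • y

/-- The time derivative of `M.flow i`. -/
noncomputable def flowVelocity (t : ℝ) (y : E) : E := deriv (M.shift i) t + deriv M.scale t • y

/-- The inverse of `M.flow i t`, when `M.scale t ≠ 0`. -/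
noncomputable def invFlow (t : ℝ) (x : E) : E := (M.scale t)⁻¹ • (x - M.shift i t)

/-- The position of the `i`-th piece at time `t`. -/
noncomputable def region (t : ℝ) : Set E := M.invFlow i t ⁻¹' M.piece i

/-- The total volume of the pieces before the motion, used to normalise the density. -/
noncomputable def totalVolume : ℝ≥0∞ := ∑ i, volume (M.piece i)

/-- The fraction of the total volume carried by the `i`-th piece. -/
noncomputable def weight : ℝ≥0∞ := M.totalVolume⁻¹ * volume (M.piece i)

/-- The transported probability measure at time `t`. -/
noncomputable def slice (t : ℝ) : Measure E :=
  M.totalVolume⁻¹ • ∑ i, (volume.restrict (M.piece i)).map (M.flow i t)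

/-- The uniform probability density on the union of the moved pieces. -/
noncomputable def density (x : E) (t : ℝ) : ℝ :=
  (⋃ i, M.region i t).indicator
    (fun _ => M.totalVolume.toReal⁻¹ * |(M.scale t ^ Module.finrank ℝ E)⁻¹|) x

/-- The velocity field which moves each piece along its flow. -/
noncomputable def velocity (x : E) (t : ℝ) : E :=
  ∑ i, (M.region i t).indicator (fun x => M.flowVelocity i t (M.invFlow i t x)) x

lemma totalVolume_ne_top : M.totalVolume ≠ ⊤ :=
  ENNReal.sum_ne_top.2 fun i _ => (M.isBounded_piece i).measure_lt_top.ne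

lemma totalVolume_toReal_pos : 0 < M.totalVolume.toReal :=
  ENNReal.toReal_pos M.sum_volume_ne_zero M.totalVolume_ne_top

lemma continuous_flow : Continuous fun z : ℝ × E => M.flow i z.1 z.2 := by
  have := (M.contDiff_shift i).continuous
  have := M.contDiff_scale.continuous
  unfold flow
  fun_prop

lemma continuous_flowVelocity : Continuous fun z : ℝ × E => M.flowVelocity i z.1 z.2 := by
  have := (M.contDiff_shift i).continuous_deriv_one
  have := M.contDiff_scale.continuous_deriv_one
  unfold flowVelocity
  fun_prop

lemma hasDerivAt_flow (t : ℝ) (y : E) :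
    HasDerivAt (fun s => M.flow i s y) (M.flowVelocity i t y) t :=
  ((M.contDiff_shift i).differentiable one_ne_zero t).hasDerivAt.add
    ((M.contDiff_scale.differentiable one_ne_zero t).hasDerivAt.smul_const y)

lemma measurable_invFlow : Measurable fun z : E × ℝ => M.invFlow i z.2 z.1 := by
  have := (M.contDiff_shift i).continuous
  have := M.contDiff_scale.continuous
  unfold invFlow
  fun_prop

lemma measurableSet_region_prod : MeasurableSet {z : E × ℝ | z.1 ∈ M.region i z.2} :=
  M.measurable_invFlow i (M.measurableSet_piece i)

lemma measurableSet_region (t : ℝ) : MeasurableSet (M.region i t) :=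
  measurable_prodMk_right (M.measurableSet_region_prod i)

lemma measurable_density : Measurable fun z : E × ℝ => M.density z.1 z.2 := by
  have hscale := M.contDiff_scale.continuous
  have hU : MeasurableSet {z : E × ℝ | z.1 ∈ ⋃ i, M.region i z.2} := by
    simp only [mem_iUnion, ofPred_exists]
    exact .iUnion M.measurableSet_region_prod
  have hc : Measurable fun z : E × ℝ =>
      M.totalVolume.toReal⁻¹ * |(M.scale z.2 ^ Module.finrank ℝ E)⁻¹| := by fun_prop
  exact hc.indicator hU

lemma measurable_velocity : Measurable fun z : E × ℝ => M.velocity z.1 z.2 := by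
  refine Finset.measurable_fun_sum _ fun i _ => ?_
  have hw : Measurable fun z : E × ℝ => M.flowVelocity i z.2 (M.invFlow i z.2 z.1) :=
    (M.continuous_flowVelocity i).measurable.comp (measurable_snd.prodMk (M.measurable_invFlow i))
  exact hw.indicator (M.measurableSet_region_prod i)

lemma density_nonneg (x : E) (t : ℝ) : 0 ≤ M.density x t :=
  indicator_nonneg (fun _ _ => by positivity) _

variable {i}

lemma invFlow_flow (ht : t ∈ Ioo α β) (y : E) : M.invFlow i t (M.flow i t y) = y := by
  rw [invFlow, flow, add_sub_cancel_left, inv_smul_smul₀ (M.scale_pos t ht).ne']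

lemma flow_invFlow (ht : t ∈ Ioo α β) (x : E) : M.flow i t (M.invFlow i t x) = x := by
  rw [invFlow, flow, smul_inv_smul₀ (M.scale_pos t ht).ne', add_sub_cancel]

lemma flow_mem_region (ht : t ∈ Ioo α β) {y : E} (hy : y ∈ M.piece i) :
    M.flow i t y ∈ M.region i t := by
  rwa [region, mem_preimage, M.invFlow_flow ht]

lemma isBounded_region (ht : t ∈ Ioo α β) : Bornology.IsBounded (M.region i t) := by
  have hcont : Continuous (M.flow i t) := (M.continuous_flow i).comp (.prodMk_right t)
  refine ((M.isBounded_piece i).isCompact_closure.image hcont).isBounded.subset fun x hx => ?_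
  exact ⟨_, subset_closure hx, M.flow_invFlow ht x⟩

lemma disjoint_region (ht : t ∈ Ioo α β) : Pairwise fun i j => Disjoint (M.region i t)
    (M.region j t) := fun i j hij => Set.disjoint_left.2 fun x hi hj =>
  hij (M.eq_of_add_smul_eq t ht i _ hi j _ hj
    ((M.flow_invFlow ht x).trans (M.flow_invFlow ht x).symm))

lemma velocity_flow (ht : t ∈ Ioo α β) {y : E} (hy : y ∈ M.piece i) :
    M.velocity (M.flow i t y) t = M.flowVelocity i t y := by
  have hmem := M.flow_mem_region ht hy
  rw [velocity, Finset.sum_eq_single i _ (by simp), indicator_of_mem hmem, M.invFlow_flow ht]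
  exact fun j _ hj => indicator_of_notMem
    (Set.disjoint_right.1 (M.disjoint_region ht hj) hmem) _

lemma withDensity_density (ht : t ∈ Ioo α β) :
    volume.withDensity (fun x => ENNReal.ofReal (M.density x t)) = M.slice t := by
  have hU : MeasurableSet (⋃ i, M.region i t) := .iUnion (M.measurableSet_region · t)
  have hdensity : (fun x => ENNReal.ofReal (M.density x t)) = (⋃ i, M.region i t).indicator
      fun _ => M.totalVolume⁻¹ * ENNReal.ofReal |(M.scale t ^ Module.finrank ℝ E)⁻¹| := by
    ext x
    simp only [density, indicator, apply_ite ENNReal.ofReal, ENNReal.ofReal_zero]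
    rw [ENNReal.ofReal_mul (by positivity), ENNReal.ofReal_inv_of_pos M.totalVolume_toReal_pos,
      ENNReal.ofReal_toReal M.totalVolume_ne_top]
  rw [hdensity, withDensity_indicator hU, withDensity_const, mul_smul, slice,
    Measure.restrict_iUnion (M.disjoint_region ht) (M.measurableSet_region · t),
    Measure.sum_fintype, Finset.smul_sum]
  congr 1
  exact Finset.sum_congr rfl fun i _ => map_restrict_add_smul (M.scale_pos t ht).ne' _ _

lemma lintegral_slice (t : ℝ) {F : E → ℝ≥0∞} (hF : Measurable F) :
    ∫⁻ x, F x ∂M.slice t = M.totalVolume⁻¹ * ∑ i, ∫⁻ y in M.piece i, F (M.flow i t y) := by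
  have hflow (i : ι) : Measurable (M.flow i t) :=
    ((M.continuous_flow i).comp (.prodMk_right t)).measurable
  simp only [slice, lintegral_smul_measure, lintegral_finsetSum_measure, smul_eq_mul,
    lintegral_map hF (hflow _)]

lemma integral_slice (t : ℝ) {F : E → ℝ} (hF : Measurable F)
    (hint : ∀ i, IntegrableOn (fun y => F (M.flow i t y)) (M.piece i)) :
    ∫ x, F x ∂M.slice t = M.totalVolume.toReal⁻¹ * ∑ i, ∫ y in M.piece i, F (M.flow i t y) := by
  have hflow (i : ι) : AEMeasurable (M.flow i t) (volume.restrict (M.piece i)) :=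
    ((M.continuous_flow i).comp (.prodMk_right t)).measurable.aemeasurable
  have hmap (i : ι) : Integrable F ((volume.restrict (M.piece i)).map (M.flow i t)) :=
    (integrable_map_measure hF.aestronglyMeasurable (hflow i)).2 (hint i)
  rw [slice, integral_smul_measure, integral_finsetSum_measure fun i _ => hmap i,
    ENNReal.toReal_inv, smul_eq_mul]
  simp only [integral_map (hflow _) hF.aestronglyMeasurable]

lemma isProbabilityMeasure_slice (t : ℝ) : IsProbabilityMeasure (M.slice t) := by
  refine ⟨?_⟩
  rw [← setLIntegral_one, Measure.restrict_univ, M.lintegral_slice t measurable_const]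
  simp only [setLIntegral_one]
  exact ENNReal.inv_mul_cancel M.sum_volume_ne_zero M.totalVolume_ne_top

lemma integral_density_mul (ht : t ∈ Ioo α β) (F : E → ℝ) :
    ∫ x, M.density x t * F x = ∫ x, F x ∂M.slice t := by
  have hmeas : Measurable fun x => M.density x t :=
    .of_uncurry_right (f := M.density) M.measurable_density
  rw [← M.withDensity_density ht, integral_withDensity_eq_integral_toReal_smul
    hmeas.ennreal_ofReal (.of_forall fun _ => ENNReal.ofReal_lt_top)]
  simp only [ENNReal.toReal_ofReal (M.density_nonneg _ _), smul_eq_mul]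

lemma isUniformDensity_density (ht : t ∈ Ioo α β) : IsUniformDensity fun x => M.density x t := by
  have hscale := M.scale_pos t ht
  have htotal := M.totalVolume_toReal_pos
  have hprob := M.isProbabilityMeasure_slice t
  have hint : ∫ x, M.density x t = 1 := by
    simpa using M.integral_density_mul ht fun _ => 1
  refine ⟨⋃ i, M.region i t, M.totalVolume.toReal⁻¹ * |(M.scale t ^ Module.finrank ℝ E)⁻¹|,
    .iUnion (M.measurableSet_region · t), Bornology.isBounded_iUnion.2 fun i =>
      M.isBounded_region ht, ?_, by positivity, .of_forall fun x => ?_, hint⟩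
  · refine pos_iff_ne_zero.2 fun h0 => zero_ne_one (α := ℝ) ?_
    rw [← hint, integral_congr_ae (g := 0), Pi.zero_def, integral_zero]
    filter_upwards [measure_eq_zero_iff_ae_notMem.1 h0] with x hx
    exact indicator_of_notMem hx _
  · simp only [density, indicator, mul_ite, mul_one, mul_zero]

lemma action_le {B : ι → ℝ}
    (hB : ∀ t ∈ Ioo α β, ∀ i, ∀ y ∈ M.piece i, ‖M.flowVelocity i t y‖ ^ 2 ≤ B i) :
    action α β M.density M.velocity ≤
      ENNReal.ofReal (β - α) * ∑ i, M.weight i * ENNReal.ofReal (B i) := by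
  have hρ := M.measurable_density
  have hv := M.measurable_velocity
  have hslice (t) (ht : t ∈ Ioo α β) :
      ∫⁻ x, ENNReal.ofReal (M.density x t * ‖M.velocity x t‖ ^ 2) ≤
        ∑ i, M.weight i * ENNReal.ofReal (B i) := by
    have hv_t : Measurable fun x => M.velocity x t := .of_uncurry_right (f := M.velocity) hv
    have hρ_t : Measurable fun x => M.density x t := .of_uncurry_right (f := M.density) hρ
    have hF : Measurable fun x => ENNReal.ofReal (‖M.velocity x t‖ ^ 2) := by fun_prop
    simp only [ENNReal.ofReal_mul (M.density_nonneg _ _)]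
    refine (lintegral_withDensity_eq_lintegral_mul _ hρ_t.ennreal_ofReal hF).symm.trans_le ?_
    rw [M.withDensity_density ht, M.lintegral_slice t hF]
    simp only [weight, mul_assoc, ← Finset.mul_sum]
    gcongr with i
    rw [mul_comm, ← setLIntegral_const]
    refine setLIntegral_mono measurable_const fun y hy => ?_
    rw [M.velocity_flow ht hy]
    exact ENNReal.ofReal_le_ofReal (hB t ht i y hy)
  rw [action, lintegral_prod_symm _ (by fun_prop), ← restrict_Ioo_eq_restrict_Icc]
  refine (setLIntegral_mono measurable_const hslice).trans_eq ?_
  rw [setLIntegral_const, Real.volume_Ioo, mul_comm]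

lemma integral_density_mul_fderiv (ht : t ∈ Ioo α β) {q : E × ℝ → ℝ} (hq : ContDiff ℝ 1 q) :
    ∫ x, M.density x t * fderiv ℝ q (x, t) (M.velocity x t, 1) = M.totalVolume.toReal⁻¹ *
      ∑ i, ∫ y in M.piece i, fderiv ℝ q (M.flow i t y, t) (M.flowVelocity i t y, 1) := by
  have hvelocity : Measurable fun x => M.velocity x t :=
    .of_uncurry_right (f := M.velocity) M.measurable_velocity
  have hF : Measurable fun x => fderiv ℝ q (x, t) (M.velocity x t, 1) :=
    (hq.continuous_fderiv_apply one_ne_zero).measurable.comp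
      ((measurable_id.prodMk measurable_const).prodMk (hvelocity.prodMk measurable_const))
  have hcongr (i : ι) : EqOn
      (fun y => fderiv ℝ q (M.flow i t y, t) (M.flowVelocity i t y, 1))
      (fun y => fderiv ℝ q (M.flow i t y, t) (M.velocity (M.flow i t y) t, 1)) (M.piece i) :=
    fun y hy => by simp only [M.velocity_flow ht hy]
  have hint (i : ι) : IntegrableOn
      (fun y => fderiv ℝ q (M.flow i t y, t) (M.flowVelocity i t y, 1)) (M.piece i) := by
    have hflow : Continuous (M.flow i t) := (M.continuous_flow i).comp (.prodMk_right t)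
    have hflow' : Continuous (M.flowVelocity i t) :=
      (M.continuous_flowVelocity i).comp (.prodMk_right t)
    exact integrableOn_of_continuous_of_isBounded ((hq.continuous_fderiv_apply one_ne_zero).comp
      ((hflow.prodMk continuous_const).prodMk (hflow'.prodMk continuous_const)))
      (M.isBounded_piece i)
  rw [M.integral_density_mul ht (fun x => fderiv ℝ q (x, t) (M.velocity x t, 1)),
    M.integral_slice t hF fun i => (hint i).congr_fun (hcongr i) (M.measurableSet_piece i)]
  simp only [setIntegral_congr_fun (M.measurableSet_piece _) (hcongr _)]

lemma isWeakSolution (hαβ : α ≤ β) :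
    IsWeakSolution α β M.density M.velocity (M.slice α) (M.slice β) := by
  intro q hq _
  have hq1 : ContDiff ℝ 1 q := hq.of_le (by exact_mod_cast le_top)
  have hbdy (t : ℝ) : ∫ x, q (x, t) ∂M.slice t =
      M.totalVolume.toReal⁻¹ * ∑ i, ∫ y in M.piece i, q (M.flow i t y, t) := by
    have hqt : Continuous fun x => q (x, t) := hq1.continuous.comp (.prodMk_left t)
    refine M.integral_slice t hqt.measurable fun i => ?_
    exact integrableOn_of_continuous_of_isBounded
      (hqt.comp ((M.continuous_flow i).comp (.prodMk_right t))) (M.isBounded_piece i)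
  rw [hbdy, hbdy, ← restrict_Ioo_eq_restrict_Icc, setIntegral_congr_fun measurableSet_Ioo
    fun t ht => M.integral_density_mul_fderiv ht hq1, restrict_Ioo_eq_restrict_Icc,
    integral_const_mul, ← mul_sub, ← Finset.sum_sub_distrib,
    integral_finsetSum _ fun i _ => (integrable_fderiv_along_flow (M.isBounded_piece i)
      (M.continuous_flow i) (M.continuous_flowVelocity i) hq1).integral_prod_left]
  congr 1
  exact Finset.sum_congr rfl fun i _ => integral_fderiv_along_flow hαβ (M.isBounded_piece i)
    (M.continuous_flow i) (M.continuous_flowVelocity i) (M.hasDerivAt_flow i) hq1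

lemma sum_weight : ∑ i, M.weight i = 1 := by
  simp only [weight, ← Finset.mul_sum]
  exact ENNReal.inv_mul_cancel M.sum_volume_ne_zero M.totalVolume_ne_top

theorem transportable (hαβ : α ≤ β) {B : ι → ℝ}
    (hB : ∀ t ∈ Ioo α β, ∀ i, ∀ y ∈ M.piece i, ‖M.flowVelocity i t y‖ ^ 2 ≤ B i) :
    Transportable α β (M.slice α) (M.slice β)
      (ENNReal.ofReal (β - α) * ∑ i, M.weight i * ENNReal.ofReal (B i)) := by
  have haction := M.action_le hB
  refine ⟨M.density, M.velocity, ⟨M.measurable_density, M.measurable_velocity, M.density_nonneg,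
    ?_, haction.trans_lt (ENNReal.mul_lt_top ENNReal.ofReal_lt_top ?_), M.isWeakSolution hαβ⟩,
    haction⟩
  · rw [← restrict_Ioo_eq_restrict_Icc]
    filter_upwards [ae_restrict_mem measurableSet_Ioo] with t ht using M.isUniformDensity_density ht
  · refine ENNReal.sum_lt_top.2 fun i _ => ENNReal.mul_lt_top ?_ ENNReal.ofReal_lt_top
    exact ((Finset.single_le_sum_of_canonicallyOrdered (Finset.mem_univ i)).trans_eq
      M.sum_weight).trans_lt ENNReal.one_lt_top

lemma slice_of_scale_eq_zero (ht : M.scale t = 0) :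
    M.slice t = ∑ i, M.weight i • Measure.dirac (M.shift i t) := by
  have hflow (i : ι) : M.flow i t = fun _ => M.shift i t := by
    ext y
    rw [flow, ht, zero_smul, add_zero]
  simp only [slice, hflow, Measure.map_const, Measure.restrict_apply_univ, weight, mul_smul,
    Finset.smul_sum]

end PieceMotion

end PieceMotion

/-! ### Shrinking cells to their centers -/

lemma sub_div_sub_mem_Ioo {α β t : ℝ} (ht : t ∈ Ioo α β) : (t - α) / (β - α) ∈ Ioo 0 1 :=
  have hlen : 0 < β - α := sub_pos.2 (ht.1.trans ht.2)
  ⟨div_pos (sub_pos.2 ht.1) hlen, (div_lt_one hlen).2 (sub_lt_sub_right ht.2 α)⟩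

namespace CellDecomposition

variable {E ι : Type*} [NormedAddCommGroup E] [InnerProductSpace ℝ E] [FiniteDimensional ℝ E]
  [MeasurableSpace E] [BorelSpace E] [Fintype ι] {Ω : Set E} {α β η : ℝ}

/-- The measure obtained from `μ` by moving the mass of each cell to its center. -/
noncomputable def discretize (S : CellDecomposition Ω η ι) (μ : Measure E) : Measure E :=
  ∑ k, μ (S.cell k) • Measure.dirac (S.center k)

/-- Every cell is scaled about its center by the same factor `s t`. -/
noncomputable def motion (S : CellDecomposition Ω η ι) (hΩ : volume Ω ≠ 0)
    (hb : Bornology.IsBounded Ω) {s : ℝ → ℝ} (hs : ContDiff ℝ 1 s)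
    (hs01 : ∀ t ∈ Ioo α β, s t ∈ Ioo 0 1) : PieceMotion E ι α β where
  piece := S.cell
  shift k t := (1 - s t) • S.center k
  scale := s
  measurableSet_piece := S.measurableSet_cell
  isBounded_piece k := hb.subset (S.cell_subset k)
  sum_volume_ne_zero := by rwa [S.sum_measure]
  contDiff_shift k := (contDiff_const.sub hs).smul contDiff_const
  contDiff_scale := hs
  scale_pos t ht := (hs01 t ht).1
  eq_of_add_smul_eq t ht i y hy j z hz h := by
    have hmem (k : ι) {w : E} (hw : w ∈ S.cell k) :
        (1 - s t) • S.center k + s t • w ∈ convexHull ℝ (S.cell k) :=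
      convex_convexHull ℝ _ (S.center_mem_convexHull k) (subset_convexHull ℝ _ hw)
        (sub_nonneg.2 (hs01 t ht).2.le) (hs01 t ht).1.le (sub_add_cancel _ _)
    by_contra hij
    exact Set.disjoint_left.1 (S.disjoint_convexHull hij) (hmem i hy) (h ▸ hmem j hz)

variable (S : CellDecomposition Ω η ι) (hΩ : volume Ω ≠ 0) (hb : Bornology.IsBounded Ω)
  {s : ℝ → ℝ} (hs : ContDiff ℝ 1 s) (hs01 : ∀ t ∈ Ioo α β, s t ∈ Ioo 0 1) {t : ℝ}

lemma slice_motion_of_eq_one (ht : s t = 1) :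
    (S.motion hΩ hb hs hs01).slice t = ProbabilityTheory.cond volume Ω := by
  have hflow (k : ι) : (S.motion hΩ hb hs hs01).flow k t = id := by
    ext1 y
    simp only [PieceMotion.flow, motion, ht, sub_self, zero_smul, one_smul, zero_add, id]
  simp only [PieceMotion.slice, hflow, Measure.map_id]
  simp only [PieceMotion.totalVolume, motion, S.sum_measure, S.sum_restrict,
    ProbabilityTheory.cond]

lemma slice_motion_of_eq_zero (ht : s t = 0) :
    (S.motion hΩ hb hs hs01).slice t = S.discretize (ProbabilityTheory.cond volume Ω) := by
  rw [PieceMotion.slice_of_scale_eq_zero _ ht, discretize]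
  refine Finset.sum_congr rfl fun k _ => ?_
  simp only [PieceMotion.weight, PieceMotion.totalVolume, motion, S.sum_measure, ht, sub_zero,
    one_smul, ProbabilityTheory.cond, Measure.smul_apply, smul_eq_mul,
    Measure.restrict_eq_self _ (S.cell_subset k)]

lemma transportable_motion (hαβ : α ≤ β) {c : ℝ} (hc : ∀ t ∈ Ioo α β, |deriv s t| ≤ c) :
    Transportable α β ((S.motion hΩ hb hs hs01).slice α) ((S.motion hΩ hb hs hs01).slice β)
      (ENNReal.ofReal ((β - α) * (c * η) ^ 2)) := by
  have hvelocity (t : ℝ) (ht : t ∈ Ioo α β) (k : ι) (y : E) (hy : y ∈ S.cell k) :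
      ‖(S.motion hΩ hb hs hs01).flowVelocity k t y‖ ^ 2 ≤ (c * η) ^ 2 := by
    have hderiv : (S.motion hΩ hb hs hs01).flowVelocity k t y = deriv s t • (y - S.center k) := by
      have hdiff := hs.differentiable one_ne_zero t
      simp only [PieceMotion.flowVelocity, motion]
      rw [deriv_smul_const (hdiff.const_sub 1), deriv_const_sub]
      module
    rw [hderiv, norm_smul]
    gcongr
    exacts [(abs_nonneg _).trans (hc t ht), hc t ht, S.norm_sub_center_le k y hy]
  refine ((S.motion hΩ hb hs hs01).transportable hαβ hvelocity).mono ?_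
  rw [← Finset.sum_mul, PieceMotion.sum_weight, one_mul,
    ENNReal.ofReal_mul (sub_nonneg.2 hαβ)]

include hΩ hb in
theorem transportable_cond_discretize (hαβ : α < β) :
    Transportable α β (ProbabilityTheory.cond volume Ω)
      (S.discretize (ProbabilityTheory.cond volume Ω)) (ENNReal.ofReal (η ^ 2 / (β - α))) := by
  have hlen : 0 < β - α := sub_pos.2 hαβ
  have hs : ContDiff ℝ 1 fun t => (β - t) / (β - α) := by fun_prop
  have hs01 (t : ℝ) (ht : t ∈ Ioo α β) : (β - t) / (β - α) ∈ Ioo 0 1 :=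
    ⟨div_pos (sub_pos.2 ht.2) hlen, (div_lt_one hlen).2 (by linarith [ht.1])⟩
  have h := S.transportable_motion hΩ hb hs hs01 hαβ.le (c := (β - α)⁻¹) fun t _ => by
    simp [abs_of_pos hlen, div_eq_inv_mul]
  rw [S.slice_motion_of_eq_one hΩ hb hs hs01 (div_self hlen.ne'),
    S.slice_motion_of_eq_zero hΩ hb hs hs01 (by simp)] at h
  have hcost : (β - α) * ((β - α)⁻¹ * η) ^ 2 = η ^ 2 / (β - α) := by field_simp
  rwa [hcost] at h

include hΩ hb in
theorem transportable_discretize_cond (hαβ : α < β) :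
    Transportable α β (S.discretize (ProbabilityTheory.cond volume Ω))
      (ProbabilityTheory.cond volume Ω) (ENNReal.ofReal (η ^ 2 / (β - α))) := by
  have hlen : 0 < β - α := sub_pos.2 hαβ
  have hs : ContDiff ℝ 1 fun t => (t - α) / (β - α) := by fun_prop
  have h := S.transportable_motion hΩ hb hs (fun t => sub_div_sub_mem_Ioo) hαβ.le
    (c := (β - α)⁻¹) fun t _ => by
    simp [abs_of_pos hlen, div_eq_inv_mul]
  rw [S.slice_motion_of_eq_one hΩ hb hs _ (div_self hlen.ne'),
    S.slice_motion_of_eq_zero hΩ hb hs _ (by simp)] at h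
  have hcost : (β - α) * ((β - α)⁻¹ * η) ^ 2 = η ^ 2 / (β - α) := by field_simp
  rwa [hcost] at h

end CellDecomposition

/-! ### Balls moving along segments -/

lemma exists_pos_le_dist_of_injective {X J : Type*} [MetricSpace X] [Finite J] {x : J → X}
    (hx : Function.Injective x) :
    ∃ D > 0, ∀ i j, i ≠ j → D ≤ dist (x i) (x j) := by
  have hev : ∀ᶠ D in nhdsWithin (0 : ℝ) (Ioi 0), ∀ i j, i ≠ j → D ≤ dist (x i) (x j) := by
    refine Filter.eventually_all.2 fun i => Filter.eventually_all.2 fun j => ?_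
    rcases eq_or_ne i j with rfl | hij
    · simp
    · filter_upwards [Ioc_mem_nhdsGT (dist_pos.2 (hx.ne hij))] with D hD _ using hD.2
  obtain ⟨D, hD, h⟩ := (eventually_mem_nhdsWithin.and hev).exists
  exact ⟨D, hD, h⟩

section Segments

variable {E J : Type*} [NormedAddCommGroup E] [InnerProductSpace ℝ E]

lemma inner_sub_sub_nonneg_of_norm_sq_add_le {x x' y y' : E}
    (h : ‖x - y‖ ^ 2 + ‖x' - y'‖ ^ 2 ≤ ‖x - y'‖ ^ 2 + ‖x' - y‖ ^ 2) :
    0 ≤ ⟪x - x', y - y'⟫ := by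
  simp only [norm_sub_sq_real] at h
  simp only [inner_sub_left, inner_sub_right]
  linarith

lemma max_norm_le_norm_add_of_inner_nonneg {u v : E} (h : 0 ≤ ⟪u, v⟫) :
    max ‖u‖ ‖v‖ ≤ ‖u + v‖ := by
  refine max_le ?_ ?_ <;> refine le_of_sq_le_sq ?_ (norm_nonneg _) <;>
    nlinarith [norm_add_sq_real u v, sq_nonneg ‖u‖, sq_nonneg ‖v‖]

lemma mul_le_dist_lineMap_of_inner_nonneg {x x' y y' : E} {D s : ℝ} (hs : s ∈ Icc (0 : ℝ) 1)
    (hD : 0 ≤ D) (hinner : 0 ≤ ⟪x - x', y - y'⟫) (hor : D ≤ ‖x - x'‖ ∨ D ≤ ‖y - y'‖) :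
    s * (1 - s) * D ≤ dist (AffineMap.lineMap x y s) (AffineMap.lineMap x' y' s) := by
  have hs0 : 0 ≤ s := hs.1
  have hs1 : 0 ≤ 1 - s := sub_nonneg.2 hs.2
  have hmax := max_norm_le_norm_add_of_inner_nonneg (u := (1 - s) • (x - x')) (v := s • (y - y'))
    (by rw [real_inner_smul_left, real_inner_smul_right]; positivity)
  rw [norm_smul, norm_smul, Real.norm_of_nonneg hs0, Real.norm_of_nonneg hs1] at hmax
  have hdist : dist (AffineMap.lineMap x y s) (AffineMap.lineMap x' y' s) =
      ‖(1 - s) • (x - x') + s • (y - y')‖ := by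
    rw [dist_eq_norm, AffineMap.lineMap_apply_module, AffineMap.lineMap_apply_module]
    congr 1
    module
  rw [hdist]
  rcases hor with h | h
  · calc s * (1 - s) * D ≤ 1 * (1 - s) * ‖x - x'‖ := by gcongr; exact hs.2
      _ ≤ _ := by rw [one_mul]; exact (le_max_left _ _).trans hmax
  · calc s * (1 - s) * D ≤ s * 1 * ‖y - y'‖ := by gcongr; linarith
      _ ≤ _ := by rw [mul_one]; exact (le_max_right _ _).trans hmax

/-- Points moving at constant speed from `x i` to `y i` during the time interval `[0, 1]` stay
apart, quantitatively in `D`, at intermediate times. Points of weight zero are disregarded. -/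
def SeparatedSegments (w : J → ℝ) (x y : J → E) (D : ℝ) : Prop :=
  ∀ s ∈ Ioo (0 : ℝ) 1, ∀ i j, 0 < w i → 0 < w j → i ≠ j →
    s * (1 - s) * D ≤ dist (AffineMap.lineMap (x i) (y i) s) (AffineMap.lineMap (x j) (y j) s)

-- By the cyclical monotonicity of an optimal plan, the segments along which it moves mass do not
-- cross.
lemma IsOptimalPlan.exists_separatedSegments {ι κ : Type*} [Fintype ι] [Fintype κ] {m : ι → ℝ}
    {n : κ → ℝ} {p : ι × κ → ℝ} {x : ι → E} {y : κ → E} (hx : Function.Injective x)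
    (hy : Function.Injective y) (hp : IsOptimalPlan m n (fun a => ‖x a.1 - y a.2‖ ^ 2) p) :
    ∃ D > 0, SeparatedSegments p (fun a => x a.1) (fun a => y a.2) D := by
  obtain ⟨D₁, hD₁, h₁⟩ := exists_pos_le_dist_of_injective hx
  obtain ⟨D₂, hD₂, h₂⟩ := exists_pos_le_dist_of_injective hy
  refine ⟨min D₁ D₂, lt_min hD₁ hD₂, fun s hs a b ha hb hab => ?_⟩
  refine mul_le_dist_lineMap_of_inner_nonneg (Ioo_subset_Icc_self hs) (lt_min hD₁ hD₂).le
    (inner_sub_sub_nonneg_of_norm_sq_add_le (hp.cost_add_cost_le ha hb)) ?_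
  rcases eq_or_ne a.1 b.1 with h | h
  · rw [← dist_eq_norm, ← dist_eq_norm]
    exact .inr ((min_le_right _ _).trans (h₂ _ _ fun h' => hab (Prod.ext h h')))
  · rw [← dist_eq_norm, ← dist_eq_norm]
    exact .inl ((min_le_left _ _).trans (h₁ _ _ h))

-- In dimension zero all segments meet, so that there is only one of them.
lemma SeparatedSegments.eq_zero_or_eq_one [Subsingleton E] [Fintype J] {w : J → ℝ}
    {x y : J → E} {D : ℝ} (h : SeparatedSegments w x y D) (hD : 0 < D) (hw : w ∈ stdSimplex ℝ J)
    (j : J) : w j = 0 ∨ w j = 1 := by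
  refine (hw.1 j).eq_or_lt.imp Eq.symm fun hj => ?_
  rw [← hw.2, eq_comm]
  refine Finset.sum_eq_single j (fun i _ hij => ?_) (by simp)
  by_contra hi
  have := h (1 / 2) (by norm_num) i j ((hw.1 i).lt_of_ne' hi) hj hij
  rw [Subsingleton.elim (AffineMap.lineMap (x i) (y i) (1 / 2 : ℝ)), dist_self] at this
  linarith

end Segments

section Balls

variable {E J : Type*} [NormedAddCommGroup E] [InnerProductSpace ℝ E] [FiniteDimensional ℝ E]
  [MeasurableSpace E] [BorelSpace E]

lemma exists_volume_ball_eq_ofReal_mul {c : ℝ} (hc : c ∈ Icc (0 : ℝ) 1)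
    (h01 : Subsingleton E → c = 0 ∨ c = 1) :
    ∃ r ≤ (1 : ℝ), volume (Metric.ball (0 : E) r) =
      ENNReal.ofReal c * volume (Metric.ball (0 : E) 1) := by
  rcases subsingleton_or_nontrivial E with hE | hE
  · rcases h01 hE with rfl | rfl
    · exact ⟨0, zero_le_one, by simp⟩
    · exact ⟨1, le_rfl, by simp⟩
  · refine ⟨c ^ ((Module.finrank ℝ E : ℝ)⁻¹),
      Real.rpow_le_one hc.1 hc.2 (inv_nonneg.2 (Nat.cast_nonneg _)), ?_⟩
    rw [Measure.addHaar_ball _ _ (Real.rpow_nonneg hc.1 _),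
      Real.rpow_inv_natCast_pow hc.1 Module.finrank_pos.ne']

lemma dist_lt_two_mul_of_add_smul_eq {F : Type*} [NormedAddCommGroup F] [NormedSpace ℝ F]
    {a b u v : F} {c : ℝ} (hc : 0 < c) (hu : ‖u‖ < 1) (hv : ‖v‖ < 1)
    (h : a + c • u = b + c • v) : dist a b < 2 * c := by
  have hab : a - b = c • (v - u) := by
    rw [smul_sub, sub_eq_sub_iff_add_eq_add, h, add_comm]
  rw [dist_eq_norm, hab, norm_smul, Real.norm_of_nonneg hc.le, mul_comm 2 c]
  gcongr
  linarith [norm_sub_le v u]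

namespace SeparatedSegments

variable [Fintype J] {w r : J → ℝ} {x y : J → E} {D α β σ : ℝ}

/-- The motion of balls with centers moving from `x j` to `y j` and with relative volumes `w j`:
their radii are small of order `σ`, and vanish at both ends of the time interval. -/
noncomputable def ballMotion (h : SeparatedSegments w x y D) (hw : w ∈ stdSimplex ℝ J)
    (hr : ∀ j, r j ≤ 1)
    (hvol : ∀ j, volume (Metric.ball (0 : E) (r j)) =
      ENNReal.ofReal (w j) * volume (Metric.ball (0 : E) 1))
    (hσ : σ ∈ Ioc 0 (D / 2)) : PieceMotion E J α β where
  piece j := Metric.ball 0 (r j)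
  shift j t := AffineMap.lineMap (x j) (y j) ((t - α) / (β - α))
  scale t := σ * ((t - α) / (β - α) * (1 - (t - α) / (β - α)))
  measurableSet_piece _ := measurableSet_ball
  isBounded_piece _ := Metric.isBounded_ball
  sum_volume_ne_zero := by
    simp only [hvol, ← Finset.sum_mul, ← ENNReal.ofReal_sum_of_nonneg fun j _ => hw.1 j, hw.2,
      ENNReal.ofReal_one, one_mul]
    exact (Metric.measure_ball_pos _ _ one_pos).ne'
  contDiff_shift j := by
    simp only [AffineMap.lineMap_apply_module]
    fun_prop
  contDiff_scale := by fun_prop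
  scale_pos t ht :=
    have hs := sub_div_sub_mem_Ioo ht
    mul_pos hσ.1 (mul_pos hs.1 (sub_pos.2 hs.2))
  eq_of_add_smul_eq t ht i u hu j v hv huv := by
    have hs := sub_div_sub_mem_Ioo ht
    set s := (t - α) / (β - α)
    have hs' : 0 < s * (1 - s) := mul_pos hs.1 (sub_pos.2 hs.2)
    have hpos {k : J} {z : E} (hz : z ∈ Metric.ball 0 (r k)) : 0 < w k := by
      have hvol_pos := Metric.measure_ball_pos volume (0 : E) (Metric.pos_of_mem_ball hz)
      rw [hvol] at hvol_pos
      exact ENNReal.ofReal_pos.1 (pos_of_mul_pos_left hvol_pos zero_le)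
    have hnorm {k : J} {z : E} (hz : z ∈ Metric.ball 0 (r k)) : ‖z‖ < 1 :=
      (mem_ball_zero_iff.1 hz).trans_le (hr k)
    by_contra hij
    refine (dist_lt_two_mul_of_add_smul_eq (mul_pos hσ.1 hs') (hnorm hu) (hnorm hv) huv).not_ge ?_
    calc 2 * (σ * (s * (1 - s))) = s * (1 - s) * (2 * σ) := by ring
      _ ≤ s * (1 - s) * D := by gcongr; linarith [hσ.2]
      _ ≤ _ := h s hs i j (hpos hu) (hpos hv) hij

variable (h : SeparatedSegments w x y D) (hw : w ∈ stdSimplex ℝ J) (hr : ∀ j, r j ≤ 1)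
  (hvol : ∀ j, volume (Metric.ball (0 : E) (r j)) =
    ENNReal.ofReal (w j) * volume (Metric.ball (0 : E) 1))
  (hσ : σ ∈ Ioc 0 (D / 2))

lemma weight_ballMotion (j : J) :
    (h.ballMotion (α := α) (β := β) hw hr hvol hσ).weight j = ENNReal.ofReal (w j) := by
  have hV : volume (Metric.ball (0 : E) 1) ≠ 0 := (Metric.measure_ball_pos _ _ one_pos).ne'
  simp only [PieceMotion.weight, PieceMotion.totalVolume, ballMotion, hvol, ← Finset.sum_mul,
    ← ENNReal.ofReal_sum_of_nonneg fun j _ => hw.1 j, hw.2, ENNReal.ofReal_one, one_mul]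
  rw [mul_left_comm, ENNReal.inv_mul_cancel hV Metric.isBounded_ball.measure_lt_top.ne, mul_one]

lemma slice_ballMotion_left :
    (h.ballMotion (α := α) (β := β) hw hr hvol hσ).slice α =
      ∑ j, ENNReal.ofReal (w j) • Measure.dirac (x j) := by
  rw [PieceMotion.slice_of_scale_eq_zero _ (by simp [ballMotion])]
  simp_rw [weight_ballMotion]
  simp [ballMotion]

lemma slice_ballMotion_right (hαβ : α < β) :
    (h.ballMotion (α := α) (β := β) hw hr hvol hσ).slice β =
      ∑ j, ENNReal.ofReal (w j) • Measure.dirac (y j) := by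
  have hlen : (β - α) / (β - α) = 1 := div_self (sub_pos.2 hαβ).ne'
  rw [PieceMotion.slice_of_scale_eq_zero _ (by simp [ballMotion, hlen])]
  simp_rw [weight_ballMotion]
  simp [ballMotion, hlen]

lemma norm_flowVelocity_ballMotion_le {t : ℝ} (ht : t ∈ Ioo α β) (j : J) {z : E} (hz : ‖z‖ ≤ 1) :
    ‖(h.ballMotion (α := α) (β := β) hw hr hvol hσ).flowVelocity j t z‖ ≤
      (‖x j - y j‖ + σ) / (β - α) := by
  have hlen : 0 < β - α := sub_pos.2 (ht.1.trans ht.2)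
  have hs := sub_div_sub_mem_Ioo ht
  have hlin (t : ℝ) : HasDerivAt (fun t => (t - α) / (β - α)) (β - α)⁻¹ t := by
    simpa using ((hasDerivAt_id t).sub_const α).div_const (β - α)
  have hshift : deriv (fun t => AffineMap.lineMap (x j) (y j) ((t - α) / (β - α))) t =
      (β - α)⁻¹ • (y j - x j) :=
    (AffineMap.hasDerivAt_lineMap.scomp t (hlin t)).deriv
  have hscale : deriv (fun t => σ * ((t - α) / (β - α) * (1 - (t - α) / (β - α)))) t =
      (β - α)⁻¹ * (σ * (1 - 2 * ((t - α) / (β - α)))) := by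
    refine (((hlin t).mul ((hlin t).const_sub 1)).const_mul σ).deriv.trans ?_
    ring
  have hflow : (h.ballMotion (α := α) (β := β) hw hr hvol hσ).flowVelocity j t z =
      (β - α)⁻¹ • ((y j - x j) + (σ * (1 - 2 * ((t - α) / (β - α)))) • z) := by
    simp only [PieceMotion.flowVelocity, ballMotion, hshift, hscale]
    module
  have habs : |1 - 2 * ((t - α) / (β - α))| ≤ 1 :=
    abs_le.2 ⟨by linarith [hs.2], by linarith [hs.1]⟩
  have hscaled : ‖(σ * (1 - 2 * ((t - α) / (β - α)))) • z‖ ≤ σ := by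
    rw [norm_smul, norm_mul, Real.norm_of_nonneg hσ.1.le, mul_assoc]
    exact mul_le_of_le_one_right hσ.1.le (mul_le_one₀ habs (norm_nonneg z) hz)
  rw [hflow, norm_smul, norm_inv, Real.norm_of_nonneg hlen.le, div_eq_inv_mul (_ + σ),
    norm_sub_rev (x j)]
  gcongr
  exact norm_add_le_of_le le_rfl hscaled

include h hw hr hvol hσ in
lemma transportable_of_volume_ball_eq (hαβ : α < β) :
    Transportable α β (∑ j, ENNReal.ofReal (w j) • Measure.dirac (x j))
      (∑ j, ENNReal.ofReal (w j) • Measure.dirac (y j))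
      (ENNReal.ofReal ((β - α) * ∑ j, w j * ((‖x j - y j‖ + σ) / (β - α)) ^ 2)) := by
  have htrans := (h.ballMotion (α := α) (β := β) hw hr hvol hσ).transportable hαβ.le
    fun t ht j z hz => pow_le_pow_left₀ (norm_nonneg _) (h.norm_flowVelocity_ballMotion_le hw hr
      hvol hσ ht j ((mem_ball_zero_iff.1 hz).le.trans (hr j))) 2
  rw [slice_ballMotion_left, slice_ballMotion_right _ _ _ _ _ hαβ] at htrans
  simp_rw [weight_ballMotion, ← ENNReal.ofReal_mul (hw.1 _)] at htrans
  rwa [← ENNReal.ofReal_sum_of_nonneg fun j _ => mul_nonneg (hw.1 j) (sq_nonneg _),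
    ← ENNReal.ofReal_mul (sub_nonneg.2 hαβ.le)] at htrans

theorem transportable (h : SeparatedSegments w x y D) (hD : 0 < D) (hw : w ∈ stdSimplex ℝ J)
    (hαβ : α < β) {δ : ℝ} (hδ : 0 < δ) :
    Transportable α β (∑ j, ENNReal.ofReal (w j) • Measure.dirac (x j))
      (∑ j, ENNReal.ofReal (w j) • Measure.dirac (y j))
      (ENNReal.ofReal ((β - α)⁻¹ * ∑ j, w j * ‖x j - y j‖ ^ 2 + δ)) := by
  have hw1 (j : J) : w j ∈ Icc (0 : ℝ) 1 :=
    ⟨hw.1 j, hw.2 ▸ Finset.single_le_sum (fun i _ => hw.1 i) (Finset.mem_univ j)⟩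
  choose r hr hvol using fun j => exists_volume_ball_eq_ofReal_mul (E := E) (hw1 j)
    fun _ => h.eq_zero_or_eq_one hD hw j
  have hcont : Continuous fun σ => (β - α) * ∑ j, w j * ((‖x j - y j‖ + σ) / (β - α)) ^ 2 := by
    fun_prop
  have hzero : (β - α) * ∑ j, w j * ((‖x j - y j‖ + 0) / (β - α)) ^ 2 =
      (β - α)⁻¹ * ∑ j, w j * ‖x j - y j‖ ^ 2 := by
    have hlen : β - α ≠ 0 := (sub_pos.2 hαβ).ne'
    simp only [Finset.mul_sum, add_zero]
    refine Finset.sum_congr rfl fun j _ => ?_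
    field_simp
  have hsmall : ∀ᶠ σ in nhds 0, (β - α) * ∑ j, w j * ((‖x j - y j‖ + σ) / (β - α)) ^ 2 <
      (β - α)⁻¹ * ∑ j, w j * ‖x j - y j‖ ^ 2 + δ :=
    (hcont.tendsto 0).eventually_lt_const (hzero.trans_lt (lt_add_of_pos_right _ hδ))
  obtain ⟨σ, hcost, hσ⟩ :=
    ((hsmall.filter_mono nhdsWithin_le_nhds).and (Ioc_mem_nhdsGT (half_pos hD))).exists
  exact (h.transportable_of_volume_ball_eq hw hr hvol hσ hαβ).mono
    (ENNReal.ofReal_le_ofReal hcost.le)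

end SeparatedSegments

end Balls

/-! ### The upper bound for the infimum -/

section UpperBound

variable {E ι κ : Type*} [NormedAddCommGroup E] [InnerProductSpace ℝ E] [MeasurableSpace E]
  [Fintype ι] [Fintype κ] {Ω₀ Ω₁ : Set E} {η : ℝ}

theorem IsOptimalPlan.transportable [FiniteDimensional ℝ E] [BorelSpace E] {m : ι → ℝ} {n : κ → ℝ}
    {p : ι × κ → ℝ} {x : ι → E} {y : κ → E}
    (hp : IsOptimalPlan m n (fun a => ‖x a.1 - y a.2‖ ^ 2) p) (hm : m ∈ stdSimplex ℝ ι)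
    (hx : Function.Injective x) (hy : Function.Injective y) {α β δ : ℝ} (hαβ : α < β)
    (hδ : 0 < δ) :
    Transportable α β (∑ k, ENNReal.ofReal (m k) • Measure.dirac (x k))
      (∑ l, ENNReal.ofReal (n l) • Measure.dirac (y l))
      (ENNReal.ofReal ((β - α)⁻¹ * ∑ a, p a * ‖x a.1 - y a.2‖ ^ 2 + δ)) := by
  obtain ⟨D, hD, hsep⟩ := hp.exists_separatedSegments hx hy
  convert hsep.transportable hD (hp.1.mem_stdSimplex hm) hαβ hδ using 1
  · rw [Fintype.sum_prod_type]
    refine Finset.sum_congr rfl fun k _ => ?_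
    rw [← hp.1.sum_snd, ENNReal.ofReal_sum_of_nonneg fun l _ => hp.1.nonneg _, Finset.sum_smul]
  · rw [Fintype.sum_prod_type_right]
    refine Finset.sum_congr rfl fun l _ => ?_
    rw [← hp.1.sum_fst, ENNReal.ofReal_sum_of_nonneg fun k _ => hp.1.nonneg _, Finset.sum_smul]

theorem transportable_cond_of_isTransportPlan [FiniteDimensional ℝ E] [BorelSpace E]
    (hΩ₀ : volume Ω₀ ≠ 0) (hΩ₁ : volume Ω₁ ≠ 0) (hb₀ : Bornology.IsBounded Ω₀)
    (hb₁ : Bornology.IsBounded Ω₁) (hη : 0 < η) (hη4 : η ≤ 1 / 4)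
    (S₀ : CellDecomposition Ω₀ η ι) (S₁ : CellDecomposition Ω₁ η κ)
    {p : ι × κ → ℝ}
    (hp : IsTransportPlan (fun k => (ProbabilityTheory.cond volume Ω₀).real (S₀.cell k))
      (fun l => (ProbabilityTheory.cond volume Ω₁).real (S₁.cell l)) p) :
    Transportable 0 1 (ProbabilityTheory.cond volume Ω₀) (ProbabilityTheory.cond volume Ω₁)
      (ENNReal.ofReal
        ((1 + 4 * η) * ∑ a, p a * ‖S₀.center a.1 - S₁.center a.2‖ ^ 2 + 3 * η)) := by
  have := ProbabilityTheory.cond_isProbabilityMeasure_of_finite hΩ₀ hb₀.measure_lt_top.ne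
  have hΩ₀_mem : ∀ᵐ x ∂ProbabilityTheory.cond volume Ω₀, x ∈ Ω₀ :=
    ProbabilityTheory.ae_cond_mem (S₀.iUnion_cell ▸ .iUnion S₀.measurableSet_cell)
  have hm := (S₀.isAEPartition hΩ₀_mem).measureReal_mem_stdSimplex
  obtain ⟨q, hq⟩ := hp.exists_isOptimalPlan hm fun a => ‖S₀.center a.1 - S₁.center a.2‖ ^ 2
  have hshrink := S₀.transportable_cond_discretize hΩ₀ hb₀ hη
  have hmove : Transportable η (1 - η) (S₀.discretize (ProbabilityTheory.cond volume Ω₀))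
      (S₁.discretize (ProbabilityTheory.cond volume Ω₁)) (ENNReal.ofReal
        ((1 - η - η)⁻¹ * ∑ a, q a * ‖S₀.center a.1 - S₁.center a.2‖ ^ 2 + η)) := by
    have hlen : η < 1 - η := by linarith
    simpa only [CellDecomposition.discretize, ofReal_measureReal (measure_ne_top _ _)] using
      hq.transportable hm S₀.center_injective S₁.center_injective hlen hη
  have hexpand := S₁.transportable_discretize_cond hΩ₁ hb₁ (show 1 - η < 1 by linarith)
  refine ((hshrink.trans hη.le (by linarith) hmove).trans (by linarith) (by linarith)
    hexpand).mono ?_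
  have hspeed : (1 - η - η)⁻¹ ≤ 1 + 4 * η := by
    rw [inv_le_iff_one_le_mul₀ (by linarith)]
    nlinarith
  have hcost : 0 ≤ ∑ a, q a * ‖S₀.center a.1 - S₁.center a.2‖ ^ 2 :=
    Finset.sum_nonneg fun a _ => mul_nonneg (hq.1.nonneg a) (sq_nonneg _)
  have hbound := mul_le_mul hspeed (hq.2 p hp) hcost (by linarith)
  rw [sub_zero, sub_sub_cancel, pow_two, mul_self_div_self, ← ENNReal.ofReal_add hη.le,
    ← ENNReal.ofReal_add]
  · exact ENNReal.ofReal_le_ofReal (by linarith)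
  all_goals
    have : 0 ≤ 1 - η - η := by linarith
    positivity

lemma ofReal_sum_mul_norm_sub_center_sq_le {D : ℝ} (hD : ∀ a ∈ Ω₀, ∀ b ∈ Ω₁, ‖a - b‖ ≤ D)
    (S₀ : CellDecomposition Ω₀ η ι) (S₁ : CellDecomposition Ω₁ η κ) {π : Measure (E × E)}
    [IsProbabilityMeasure π] (hfst : ∀ᵐ x ∂π.map Prod.fst, x ∈ Ω₀)
    (hsnd : ∀ᵐ x ∂π.map Prod.snd, x ∈ Ω₁) :
    ENNReal.ofReal (∑ a : ι × κ, π.real (S₀.cell a.1 ×ˢ S₁.cell a.2) *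
        ‖S₀.center a.1 - S₁.center a.2‖ ^ 2) ≤
      ∫⁻ q, ENNReal.ofReal (‖q.1 - q.2‖ ^ 2) ∂π + ENNReal.ofReal (4 * D * η) := by
  have hQ := (S₀.isAEPartition hfst).prod (S₁.isAEPartition hsnd)
  calc ENNReal.ofReal (∑ a : ι × κ, π.real (S₀.cell a.1 ×ˢ S₁.cell a.2) *
        ‖S₀.center a.1 - S₁.center a.2‖ ^ 2)
      = ∑ a : ι × κ, ENNReal.ofReal (‖S₀.center a.1 - S₁.center a.2‖ ^ 2) *
        π (S₀.cell a.1 ×ˢ S₁.cell a.2) := by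
        rw [ENNReal.ofReal_sum_of_nonneg fun a _ => by positivity]
        refine Finset.sum_congr rfl fun a _ => ?_
        rw [ENNReal.ofReal_mul measureReal_nonneg, ofReal_measureReal, mul_comm]
    _ ≤ ∫⁻ q, ENNReal.ofReal (‖q.1 - q.2‖ ^ 2 + 4 * D * η) ∂π :=
        hQ.sum_mul_le_lintegral fun a q hq => ENNReal.ofReal_le_ofReal <| norm_sub_sq_le_add
          (hD _ (S₀.center_mem _) _ (S₁.center_mem _))
          (hD _ (S₀.cell_subset _ hq.1) _ (S₁.cell_subset _ hq.2))
          (by rw [norm_sub_rev]; exact S₀.norm_sub_center_le _ _ hq.1)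
          (by rw [norm_sub_rev]; exact S₁.norm_sub_center_le _ _ hq.2)
    _ ≤ ∫⁻ q, (ENNReal.ofReal (‖q.1 - q.2‖ ^ 2) + ENNReal.ofReal (4 * D * η)) ∂π :=
        lintegral_mono fun _ => ENNReal.ofReal_add_le
    _ = _ := by rw [lintegral_add_right _ measurable_const, lintegral_const, measure_univ, mul_one]

end UpperBound

section Wasserstein

variable {d : ℕ} {Ω₀ Ω₁ : Set (EuclideanSpace ℝ (Fin d))}

lemma sInf_transportable_le_lintegral (hΩ₀ : MeasurableSet Ω₀) (hΩ₁ : MeasurableSet Ω₁)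
    (hb₀ : Bornology.IsBounded Ω₀) (hb₁ : Bornology.IsBounded Ω₁) (hpos₀ : volume Ω₀ ≠ 0)
    (hpos₁ : volume Ω₁ ≠ 0)
    {π : Measure (EuclideanSpace ℝ (Fin d) × EuclideanSpace ℝ (Fin d))}
    (hfst : π.map Prod.fst = ProbabilityTheory.cond volume Ω₀)
    (hsnd : π.map Prod.snd = ProbabilityTheory.cond volume Ω₁) :
    sInf {C | Transportable 0 1 (ProbabilityTheory.cond volume Ω₀)
      (ProbabilityTheory.cond volume Ω₁) C} ≤ ∫⁻ q, ENNReal.ofReal (‖q.1 - q.2‖ ^ 2) ∂π := by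
  rcases eq_or_ne (∫⁻ q, ENNReal.ofReal (‖q.1 - q.2‖ ^ 2) ∂π) ⊤ with htop | htop
  · exact htop ▸ le_top
  have : IsProbabilityMeasure (π.map Prod.fst) := hfst ▸
    ProbabilityTheory.cond_isProbabilityMeasure_of_finite hpos₀ hb₀.measure_lt_top.ne
  have := Measure.isProbabilityMeasure_of_map (μ := π) Prod.fst
  obtain ⟨D, hD₀, hD⟩ := exists_norm_sub_le_of_isBounded hb₀ hb₁
  have hmem₀ : ∀ᵐ x ∂π.map Prod.fst, x ∈ Ω₀ := hfst ▸ ProbabilityTheory.ae_cond_mem hΩ₀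
  have hmem₁ : ∀ᵐ x ∂π.map Prod.snd, x ∈ Ω₁ := hsnd ▸ ProbabilityTheory.ae_cond_mem hΩ₁
  set c := (∫⁻ q, ENNReal.ofReal (‖q.1 - q.2‖ ^ 2) ∂π).toReal with hc
  refine le_of_forall_le_add_ofReal_mul (B := 4 * c + 8 * D + 3) (η₀ := 1 / 4) (by norm_num)
    fun η hη hη4 => ?_
  obtain ⟨s, ⟨S₀⟩⟩ := exists_cellDecomposition hΩ₀ hb₀ hη
  obtain ⟨t, ⟨S₁⟩⟩ := exists_cellDecomposition hΩ₁ hb₁ hη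
  have hplan := (S₀.isAEPartition hmem₀).isTransportPlan (S₁.isAEPartition hmem₁)
  rw [hfst, hsnd] at hplan
  have hcost := ofReal_sum_mul_norm_sub_center_sq_le hD S₀ S₁ hmem₀ hmem₁
  rw [← ENNReal.ofReal_toReal htop, ← hc, ← ENNReal.ofReal_add (by positivity) (by positivity),
    ENNReal.ofReal_le_ofReal_iff (by positivity)] at hcost
  have htrans := transportable_cond_of_isTransportPlan hpos₀ hpos₁ hb₀ hb₁ hη hη4 S₀ S₁ hplan
  refine le_trans (sInf_le htrans) ?_
  rw [← ENNReal.ofReal_toReal htop, ← hc, ← ENNReal.ofReal_add (by positivity) (by positivity)]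
  refine ENNReal.ofReal_le_ofReal ?_
  calc _ ≤ (1 + 4 * η) * (c + 4 * D * η) + 3 * η := by gcongr
    _ = c + (4 * c + 4 * D * (1 + 4 * η) + 3) * η := by ring
    _ ≤ c + (4 * c + 4 * D * 2 + 3) * η := by gcongr; linarith
    _ = _ := by ring

end Wasserstein

/-- **Theorem 7.1.** For bounded measurable sets `Ω₀, Ω₁ ⊆ ℝ^d` of positive
volume, the infimum of the action over paths of uniform probability densities on bounded
sets (shape measures of arbitrary volume) transported weakly by `v`, connecting
`𝒰_{Ω₀}` to `𝒰_{Ω₁}`, equals the squared Wasserstein distance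
`d_W(𝒰_{Ω₀} dx, 𝒰_{Ω₁} dx)²`. -/
theorem shape_distance_no_volume_constraint_eq_wasserstein
    (d : ℕ) (Ω₀ Ω₁ : Set (EuclideanSpace ℝ (Fin d)))
    (h₀meas : MeasurableSet Ω₀) (h₁meas : MeasurableSet Ω₁)
    (h₀bdd : Bornology.IsBounded Ω₀) (h₁bdd : Bornology.IsBounded Ω₁)
    (h₀pos : 0 < volume Ω₀) (h₁pos : 0 < volume Ω₁) :
    sInf { A | ∃ ρ v, UniformAdmissible Ω₀ Ω₁ ρ v ∧
        A = ∫⁻ q, ENNReal.ofReal (ρ q.1 q.2 * ‖v q.1 q.2‖ ^ 2) ∂(spaceTime d) } =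
      W2sq ((volume Ω₀)⁻¹ • volume.restrict Ω₀) ((volume Ω₁)⁻¹ • volume.restrict Ω₁) := by
  have := ProbabilityTheory.cond_isProbabilityMeasure_of_finite h₀pos.ne' h₀bdd.measure_lt_top.ne
  have := ProbabilityTheory.cond_isProbabilityMeasure_of_finite h₁pos.ne' h₁bdd.measure_lt_top.ne
  refine le_antisymm (le_sInf ?_) (le_sInf ?_)
  · rintro _ ⟨π, hfst, hsnd, rfl⟩
    refine le_trans (le_sInf ?_) (sInf_transportable_le_lintegral h₀meas h₁meas h₀bdd h₁bdd
      h₀pos.ne' h₁pos.ne' hfst hsnd)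
    rintro C ⟨ρ, v, h, hC⟩
    exact le_trans (sInf_le ⟨ρ, v, uniformAdmissible_iff.2 h, rfl⟩) hC
  · rintro _ ⟨ρ, v, h, rfl⟩
    exact (uniformAdmissible_iff.1 h).W2sq_le_action h₀meas h₁meas h₀bdd h₁bdd
      (ProbabilityTheory.ae_cond_mem h₀meas) (ProbabilityTheory.ae_cond_mem h₁meas)
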